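/- arXiv:2508.17308 — 2 statements merged into one kernel-verified Lean document; each statement's English description precedes it below -/
import Mathlib

section
/- The basin of every attracting or parabolic cycle of g : U' → U contains a critical point of g. -/
open Set Function Metric Topology Filter

noncomputable section

/-- A topological disk: a (nonempty, connected) simply connected planar domain. -/
def IsTopDisk (V : Set ℂ) : Prop :=
  IsOpen V ∧ IsConnected V ∧ SimplyConnectedSpace V

/-- Critical points of `g` lying in `U'`. -/
def critPts (g : ℂ → ℂ) (U' : Set ℂ) : Set ℂ := {z | z ∈ U' ∧ deriv g z = 0}

/-- The postcritical set of `g : U' → U`. -/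
def postCrit (g : ℂ → ℂ) (U' : Set ℂ) : Set ℂ :=
  closure (⋃ n : ℕ, g^[n] '' critPts g U')

/-- `g : U' → U` is a proper map: preimages of compact subsets of `U` are compact. -/
def ProperOn (g : ℂ → ℂ) (U' U : Set ℂ) : Prop :=
  ∀ K : Set ℂ, K ⊆ U → IsCompact K → IsCompact (U' ∩ g ⁻¹' K)

/-- `g : U' → U` has degree `d`: every point of `U` has a preimage, and every point of `U`
which is not a critical value has exactly `d` preimages in `U'`. -/
def HasDeg (g : ℂ → ℂ) (U' U : Set ℂ) (d : ℕ) : Prop :=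
  (∀ w ∈ U, (U' ∩ g ⁻¹' {w}).Nonempty) ∧
  ∀ w ∈ U, w ∉ g '' critPts g U' → (U' ∩ g ⁻¹' {w}).ncard = d

/-- Standing assumptions: `U' ⊆ U` are simply connected domains in `ℂ` with `U' ≠ U`,
`g : U' → U` is a proper holomorphic map of degree `d ≥ 2`, all forward iterates of the
critical points are defined, the postcritical set is a compact subset of `U'`, and if the
postcritical set is a singleton `{c}` then `g⁻¹(c) ≠ {c}`. -/
structure PLSetting (g : ℂ → ℂ) (U' U : Set ℂ) (d : ℕ) : Prop where
  disk' : IsTopDisk U'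
  disk : IsTopDisk U
  subset : U' ⊆ U
  ne : U' ≠ U
  two_le_d : 2 ≤ d
  holo : DifferentiableOn ℂ g U'
  mapsTo : MapsTo g U' U
  proper : ProperOn g U' U
  deg : HasDeg g U' U d
  crit_orbit : ∀ c ∈ critPts g U', ∀ n : ℕ, g^[n] c ∈ U'
  postCrit_compact : IsCompact (postCrit g U')
  postCrit_subset : postCrit g U' ⊆ U'
  postCrit_singleton : ∀ c : ℂ, postCrit g U' = {c} → U' ∩ g ⁻¹' {c} ≠ {c}

/-- The cycle (forward orbit) of a periodic point `a`. -/
def cycleSet (g : ℂ → ℂ) (a : ℂ) : Set ℂ := Set.range fun n : ℕ => g^[n] a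

/-- `z` lies in the basin of the cycle of `a`: its forward orbit is well-defined and
converges to the cycle. -/
def attractedTo (g : ℂ → ℂ) (U' : Set ℂ) (a z : ℂ) : Prop :=
  (∀ n : ℕ, g^[n] z ∈ U') ∧
    Tendsto (fun n : ℕ => Metric.infDist (g^[n] z) (cycleSet g a)) atTop (𝓝 0)

/-!
If the basin contained no critical point, then for every disc `D` in the basin centred at an iterate
`g^[N] z₀`, the inverse branch of `g^[N]` sending `g^[N] z₀` to `z₀` would be defined on all of `D`,
with values in `U'`. As `U'` is a simply connected proper subdomain of the plane, the Schwarz lemma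
bounds (radius of `D`) / `|(g^[N])' z₀|` independently of `N` and `D`.

For an attracting cycle take `z₀ = a` and a fixed disc about `a`: the derivatives tend to `0`.

For a parabolic cycle, pass to an iterate `f` of multiplier one. It is not the identity near
`a`, since otherwise properness and the identity theorem would force `U' = U`. Write `f z = z +
(z - a) ^ (m + 1) * k z` with `k a ≠ 0`. In the coordinate `-1 / (m k(a) (z - a) ^ m)` the map
is nearly the translation by `1`, so each point `z` of a suitable orbit in an attracting petal
is the centre of a disc in the petal of radius comparable to `|z - a|`. Near the attracting
directions `f` does not expand `|dz| / |z - a| ^ (3 / 2)` (any exponent strictly between `1` and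
`m + 1` would do), hence `|(f^[n])' z₀| = O(|f^[n] z₀ - a| ^ (3 / 2))`, which is negligible
against the radius of the disc about `f^[n] z₀`.
-/

section PartialIterates

/-- The domain of the `n`-th iterate of the partial map `g : D → α`: the points whose first `n`
iterates, counted from `g^[0] z = z`, lie in `D`. -/
def iterateDomain {α : Type*} (g : α → α) (D : Set α) (n : ℕ) : Set α :=
  {z | ∀ i < n, g^[i] z ∈ D}

lemma iterateDomain_succ {α : Type*} (g : α → α) (D : Set α) (n : ℕ) :
    iterateDomain g D (n + 1) = D ∩ g ⁻¹' iterateDomain g D n := by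
  ext z
  exact Nat.forall_lt_succ_left

lemma isOpen_iterateDomain {X : Type*} [TopologicalSpace X] {g : X → X} {D : Set X}
    (hD : IsOpen D) (hg : ContinuousOn g D) (n : ℕ) : IsOpen (iterateDomain g D n) := by
  induction n with
  | zero => simp [iterateDomain]
  | succ n ih => exact iterateDomain_succ g D n ▸ hg.isOpen_inter_preimage hD ih

lemma analyticAt_iterate {𝕜 E : Type*} [NontriviallyNormedField 𝕜] [NormedAddCommGroup E]
    [NormedSpace 𝕜 E] {g : E → E} {z : E} {n : ℕ} (h : ∀ i < n, AnalyticAt 𝕜 g (g^[i] z)) :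
    AnalyticAt 𝕜 (g^[n]) z := by
  induction n with
  | zero => exact analyticAt_id
  | succ n ih =>
    rw [iterate_succ']
    exact (h n n.lt_succ_self).comp (ih fun i hi => h i (hi.trans n.lt_succ_self))

end PartialIterates

lemma isCoveringMapOn_of_isProperMap {X Y : Type*} [TopologicalSpace X] [TopologicalSpace Y]
    [T2Space X] [T1Space Y] {f : X → Y} {s : Set Y} (hf : IsProperMap f)
    (hs : IsLocalHomeomorphOn f (f ⁻¹' s)) : IsCoveringMapOn f s :=
  hf.isClosedMap.isCoveringMapOn_of_isLocalHomeomorphOn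
    (fun y hy => (hf.isCompact_preimage isCompact_singleton).finite <|
      .of_openPartialHomeomorph f subset_rfl fun x hx => by
        obtain ⟨e, hxe, rfl⟩ := hs x (by rwa [mem_preimage, show f x = y from hx])
        exact ⟨e, hxe, rfl⟩) hs

lemma differentiableAt_of_comp_eventuallyEq {𝕜 : Type*} [NontriviallyNormedField 𝕜]
    [CompleteSpace 𝕜] {g ψ φ : 𝕜 → 𝕜} {w g' : 𝕜} (hg : HasStrictDerivAt g g' (ψ w))
    (hg' : g' ≠ 0) (hψ : ContinuousAt ψ w) (hφ : DifferentiableAt 𝕜 φ w)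
    (heq : g ∘ ψ =ᶠ[𝓝 w] φ) : DifferentiableAt 𝕜 ψ w := by
  have hinv : DifferentiableAt 𝕜 (hg.localInverse g _ _ hg') (φ w) := by
    rw [← heq.self_of_nhds]
    exact (hg.to_localInverse hg').hasDerivAt.differentiableAt
  refine (hinv.comp w hφ).congr_of_eventuallyEq ?_
  filter_upwards [hψ.eventually (hg.eventually_left_inverse hg'), heq] with v hleft hv
  rw [comp_apply, ← hv, comp_apply, hleft]

lemma exists_differentiableOn_sq_eq_sub {V : Set ℂ} (hV : IsOpen V) (hsc : IsSimplyConnected V)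
    {u : ℂ} (hu : u ∉ V) :
    ∃ s : ℂ → ℂ, DifferentiableOn ℂ s V ∧ ∀ z ∈ V, s z ^ 2 = z - u ∧ deriv s z ≠ 0 := by
  have hsub : ∀ z ∈ V, z - u ≠ 0 := fun z hz h0 => hu (sub_eq_zero.1 h0 ▸ hz)
  obtain ⟨s, hsc, hs⟩ := Complex.exists_continuousOn_pow_eq hsc hV (g := fun z => z - u)
    (by fun_prop) (fun ⟨z, hz, hzu⟩ => hsub z hz hzu) two_ne_zero
  have hs0 : ∀ z ∈ V, s z ≠ 0 := fun z hz h0 => hsub z hz (by rw [← hs, h0, zero_pow two_ne_zero])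
  have hsd : ∀ z ∈ V, DifferentiableAt ℂ s z := fun z hz =>
    differentiableAt_of_comp_eventuallyEq (φ := fun z => z - u) (hasStrictDerivAt_pow 2 (s z))
      (by simpa using hs0 z hz) (hsc.continuousAt (hV.mem_nhds hz)) (by fun_prop)
      (.of_forall hs)
  refine ⟨s, fun z hz => (hsd z hz).differentiableWithinAt, fun z hz => ⟨hs z, fun h0 => ?_⟩⟩
  have hsq : HasDerivAt (fun z => z - u) (2 * s z * deriv s z) z := by
    simpa [← hs] using (hsd z hz).hasDerivAt.fun_pow 2
  simpa [h0] using hsq.unique ((hasDerivAt_id z).sub_const u)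

-- The image of a branch `s` of `√(z - u)` is disjoint from its reflection `-s`, so it avoids a
-- disc about `-s z₀`, and `1 / (s + s z₀)` is bounded.
lemma exists_bounded_deriv_ne_zero {V : Set ℂ} (hV : IsOpen V) (hsc : IsSimplyConnected V)
    (hne : V ≠ univ) {z₀ : ℂ} (hz₀ : z₀ ∈ V) :
    ∃ (φ : ℂ → ℂ) (M : ℝ), DifferentiableOn ℂ φ V ∧ MapsTo φ V (closedBall 0 M) ∧
      deriv φ z₀ ≠ 0 := by
  obtain ⟨u, hu⟩ := (ne_univ_iff_exists_notMem V).1 hne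
  obtain ⟨s, hsd, hs⟩ := exists_differentiableOn_sq_eq_sub hV hsc hu
  have hs₀ : DifferentiableAt ℂ s z₀ := hsd.differentiableAt (hV.mem_nhds hz₀)
  obtain ⟨ε, hε, hball⟩ : ∃ ε > 0, ball (s z₀) ε ⊆ s '' V := by
    have hopen := (hsd.analyticAt (hV.mem_nhds hz₀)).hasStrictDerivAt.map_nhds_eq (hs z₀ hz₀).2
    exact Metric.mem_nhds_iff.1 (hopen ▸ image_mem_map (hV.mem_nhds hz₀))
  have hfar : ∀ z ∈ V, ε ≤ ‖s z + s z₀‖ := by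
    intro z hz
    by_contra! hlt
    have hneg : -s z ∈ ball (s z₀) ε := by
      rwa [mem_ball, dist_eq_norm, ← neg_add', norm_neg]
    obtain ⟨z', hz', hsz'⟩ := hball hneg
    have hzz' : z' = z := by
      have h := (hs z' hz').1
      rwa [hsz', neg_sq, (hs z hz).1, sub_left_inj, eq_comm] at h
    subst hzz'
    have hs0 : s z' = 0 := self_eq_neg.1 hsz'
    have h := (hs z' hz').1
    rw [hs0, zero_pow two_ne_zero, eq_comm, sub_eq_zero] at h
    exact hu (h ▸ hz')
  have hne0 : ∀ z ∈ V, s z + s z₀ ≠ 0 := fun z hz => norm_pos_iff.1 (hε.trans_le (hfar z hz))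
  refine ⟨fun z => (s z + s z₀)⁻¹, ε⁻¹, (hsd.add_const _).inv hne0, fun z hz => ?_, ?_⟩
  · rw [mem_closedBall_zero_iff, norm_inv]
    exact inv_anti₀ hε (hfar z hz)
  · rw [((hs₀.hasDerivAt.add_const (s z₀)).fun_inv (hne0 z₀ hz₀)).deriv]
    exact div_ne_zero (neg_ne_zero.2 (hs z₀ hz₀).2) (pow_ne_zero _ (hne0 z₀ hz₀))

lemma exists_norm_deriv_mul_le {V : Set ℂ} (hV : IsOpen V) (hsc : IsSimplyConnected V)
    (hne : V ≠ univ) {z₀ : ℂ} (hz₀ : z₀ ∈ V) :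
    ∃ C : ℝ, ∀ (x : ℂ) (r : ℝ) (h : ℂ → ℂ), 0 < r → DifferentiableOn ℂ h (ball x r) →
      MapsTo h (ball x r) V → h x = z₀ → ‖deriv h x‖ * r ≤ C := by
  obtain ⟨φ, M, hφd, hφM, hφ'⟩ := exists_bounded_deriv_ne_zero hV hsc hne hz₀
  refine ⟨(M + M) / ‖deriv φ z₀‖, fun x r h hr hd hm hx => ?_⟩
  have hnorm : ∀ w ∈ ball x r, ‖φ (h w)‖ ≤ M := fun w hw => mem_closedBall_zero_iff.1 (hφM (hm hw))
  have hschwarz : ‖deriv (φ ∘ h) x‖ ≤ (M + M) / r :=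
    Complex.norm_deriv_le_div_of_mapsTo_ball (hφd.comp hd hm) (fun w hw => by
      rw [mem_closedBall, dist_eq_norm]
      exact (norm_sub_le _ _).trans
        (add_le_add (hnorm w hw) (hnorm x (mem_ball_self hr)))) hr
  rw [deriv_comp x (hφd.differentiableAt (hV.mem_nhds (hm (mem_ball_self hr))))
    (hd.differentiableAt (ball_mem_nhds x hr)), hx, norm_mul, le_div_iff₀ hr] at hschwarz
  rw [le_div_iff₀ (norm_pos_iff.2 hφ')]
  linarith

/-- `g` restricts to a proper holomorphic map from the open set `U'` to the larger open set `U`,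
i.e. `g : U' → U` is polynomial-like except that `U'` need not be relatively compact in `U`. -/
structure IsProperHolomorphic (g : ℂ → ℂ) (U' U : Set ℂ) : Prop where
  isOpen_source : IsOpen U'
  isOpen_target : IsOpen U
  subset : U' ⊆ U
  differentiableOn : DifferentiableOn ℂ g U'
  mapsTo : MapsTo g U' U
  proper : ProperOn g U' U

namespace IsProperHolomorphic

variable {g : ℂ → ℂ} {U' U : Set ℂ} (H : IsProperHolomorphic g U' U)
include H

lemma analyticAt {z : ℂ} (hz : z ∈ U') : AnalyticAt ℂ g z :=
  H.differentiableOn.analyticAt (H.isOpen_source.mem_nhds hz)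

lemma analyticAt_iterate {n : ℕ} {z : ℂ} (hz : z ∈ iterateDomain g U' n) :
    AnalyticAt ℂ (g^[n]) z :=
  _root_.analyticAt_iterate fun i hi => H.analyticAt (hz i hi)

lemma isProperMap_restrict : IsProperMap (H.mapsTo.restrict g U' U) := by
  have : LocallyCompactSpace U := H.isOpen_target.locallyCompactSpace
  refine isProperMap_iff_isCompact_preimage.2
    ⟨H.differentiableOn.continuousOn.mapsToRestrict H.mapsTo, fun K hK => ?_⟩
  have himage : Subtype.val '' (H.mapsTo.restrict g U' U ⁻¹' K) =
      U' ∩ g ⁻¹' (Subtype.val '' K) := by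
    ext z
    constructor
    · rintro ⟨y, hy, rfl⟩
      exact ⟨y.2, _, hy, rfl⟩
    · rintro ⟨hz, y, hy, hyz⟩
      obtain rfl : y = H.mapsTo.restrict g U' U ⟨z, hz⟩ := Subtype.ext hyz
      exact ⟨⟨z, hz⟩, hy, rfl⟩
  rw [Subtype.isCompact_iff, himage]
  exact H.proper _ (Subtype.coe_image_subset U K) (hK.image continuous_subtype_val)

lemma isLocalHomeomorphOn_diff_critPts : IsLocalHomeomorphOn g (U' \ critPts g U') := by
  refine IsLocalHomeomorphOn.mk _ _ fun z hz => ?_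
  have hs := (H.analyticAt hz.1).hasStrictDerivAt.hasStrictFDerivAt_equiv
    fun h => hz.2 ⟨hz.1, h⟩
  exact ⟨hs.toOpenPartialHomeomorph g, hs.mem_toOpenPartialHomeomorph_source, fun _ _ => rfl⟩

lemma isCoveringMapOn_restrict :
    IsCoveringMapOn (H.mapsTo.restrict g U' U) {w | (w : ℂ) ∉ g '' critPts g U'} := by
  refine isCoveringMapOn_of_isProperMap H.isProperMap_restrict ?_
  have hval : IsLocalHomeomorph (Subtype.val : U → ℂ) :=
    H.isOpen_target.isOpenEmbedding_subtypeVal.isLocalHomeomorph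
  have hval' : IsLocalHomeomorph (Subtype.val : U' → ℂ) :=
    H.isOpen_source.isOpenEmbedding_subtypeVal.isLocalHomeomorph
  refine .of_comp_left (g := (Subtype.val : U → ℂ)) ?_
    (hval.isLocalHomeomorphOn.mono (subset_univ _))
    fun _ _ => H.isProperMap_restrict.continuous.continuousAt
  exact H.isLocalHomeomorphOn_diff_critPts.comp (hval'.isLocalHomeomorphOn.mono (subset_univ _))
    fun y hy => ⟨y.2, fun hc => hy ⟨y, hc, rfl⟩⟩

lemma exists_lift {D : Set ℂ} (hD : IsOpen D) (hsc : IsSimplyConnected D) {φ : ℂ → ℂ}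
    (hφ : DifferentiableOn ℂ φ D) (hmaps : MapsTo φ D U)
    (hcrit : ∀ w ∈ D, φ w ∉ g '' critPts g U') {x y : ℂ} (hx : x ∈ D) (hy : y ∈ U')
    (hyx : g y = φ x) :
    ∃ ψ : ℂ → ℂ, DifferentiableOn ℂ ψ D ∧ MapsTo ψ D U' ∧ EqOn (g ∘ ψ) φ D ∧ ψ x = y := by
  have : SimplyConnectedSpace D := hsc
  have : LocallyPathConnectedSpace D := hD.locallyPathConnectedSpace
  obtain ⟨F, ⟨hFx, hF⟩, -⟩ := H.isCoveringMapOn_restrict.existsUnique_continuousMap_lifts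
    ⟨hmaps.restrict φ D U, hφ.continuousOn.mapsToRestrict hmaps⟩
    (a₀ := ⟨x, hx⟩) (e₀ := ⟨y, hy⟩) (Subtype.ext hyx) fun w => hcrit w w.2
  obtain ⟨ψ, hψ⟩ : ∃ ψ : ℂ → ℂ, ∀ w : D, ψ w = F w :=
    ⟨extend Subtype.val (fun w => F w) 0, fun w => Subtype.val_injective.extend_apply _ _ w⟩
  have hψc : ContinuousOn ψ D := by
    rw [continuousOn_iff_continuous_domRestrict, show D.domRestrict ψ = fun w => (F w : ℂ) from
      funext hψ]
    fun_prop
  have hmap : MapsTo ψ D U' := fun w hw => hψ ⟨w, hw⟩ ▸ (F _).2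
  have heq : EqOn (g ∘ ψ) φ D := fun w hw => by
    rw [comp_apply, hψ ⟨w, hw⟩]
    exact congrArg Subtype.val (congrFun hF ⟨w, hw⟩)
  refine ⟨ψ, fun w hw => ?_, hmap, heq, by rw [hψ ⟨x, hx⟩, hFx]⟩
  have hDw : D ∈ 𝓝 w := hD.mem_nhds hw
  exact (differentiableAt_of_comp_eventuallyEq (H.analyticAt (hmap hw)).hasStrictDerivAt
    (fun h0 => hcrit w hw ⟨ψ w, ⟨hmap hw, h0⟩, heq hw⟩) (hψc.continuousAt hDw)
    (hφ.differentiableAt hDw) (heq.eventuallyEq_of_mem hDw)).differentiableWithinAt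

lemma exists_inverse_branch {A D : Set ℂ} (hAU' : A ⊆ U') (hA : U' ∩ g ⁻¹' A ⊆ A)
    (hcrit : Disjoint (critPts g U') A) (hD : IsOpen D) (hsc : IsSimplyConnected D) (hDA : D ⊆ A)
    {N : ℕ} {y : ℂ} (hy : y ∈ iterateDomain g U' N) (hyD : g^[N] y ∈ D) :
    ∃ h : ℂ → ℂ, DifferentiableOn ℂ h D ∧ MapsTo h D A ∧ EqOn (g^[N] ∘ h) id D ∧
      h (g^[N] y) = y := by
  induction N generalizing y with
  | zero => exact ⟨id, differentiableOn_id, hDA, fun _ _ => rfl, rfl⟩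
  | succ N ih =>
    obtain ⟨hyU', hgy⟩ := (iterateDomain_succ g U' N).subset hy
    obtain ⟨h, hd, hhA, hinv, hgyh⟩ := ih hgy hyD
    obtain ⟨ψ, hψd, hψm, hψ, hψy⟩ := H.exists_lift hD hsc hd
      (hhA.mono_right (hAU'.trans H.subset))
      (by
        rintro w hw ⟨c, hc, hcw⟩
        exact hcrit.le_bot ⟨hc, hA ⟨hc.1, show g c ∈ A from hcw ▸ hhA hw⟩⟩)
      hyD hyU' hgyh.symm
    have hgψ : ∀ w ∈ D, g (ψ w) = h w := hψ
    refine ⟨ψ, hψd, fun w hw => hA ⟨hψm hw, ?_⟩, fun w hw => ?_, hψy⟩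
    · rw [mem_preimage, hgψ w hw]
      exact hhA hw
    · rw [comp_apply, iterate_succ_apply, hgψ w hw]
      exact hinv hw

-- Without a critical point in `A`, the inverse branch of `g^[N]` taking `g^[N] z₀` to `z₀` extends
-- to the whole ball, and its derivative `1 / (g^[N])' z₀` contradicts the Schwarz-type bound.
lemma inter_critPts_nonempty (hsc : IsSimplyConnected U') (hne : U' ≠ univ) {A : Set ℂ}
    (hAU' : A ⊆ U') (hA : U' ∩ g ⁻¹' A ⊆ A) {z₀ : ℂ} (hz₀ : z₀ ∈ U')
    (hball : ∀ C : ℝ, ∃ N r, z₀ ∈ iterateDomain g U' N ∧ 0 < r ∧ ball (g^[N] z₀) r ⊆ A ∧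
      C * ‖deriv (g^[N]) z₀‖ < r) :
    (critPts g U' ∩ A).Nonempty := by
  by_contra hcrit
  rw [not_nonempty_iff_eq_empty, ← disjoint_iff_inter_eq_empty] at hcrit
  obtain ⟨C, hC⟩ := exists_norm_deriv_mul_le H.isOpen_source hsc hne hz₀
  obtain ⟨N, r, hN, hr, hrA, hlt⟩ := hball C
  have hx : g^[N] z₀ ∈ ball (g^[N] z₀) r := mem_ball_self hr
  have : ContractibleSpace (ball (g^[N] z₀) r) := (convex_ball _ r).contractibleSpace ⟨_, hx⟩
  have hscb : IsSimplyConnected (ball (g^[N] z₀) r) := inferInstanceAs (SimplyConnectedSpace _)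
  obtain ⟨h, hd, hhA, hinv, hhx⟩ :=
    H.exists_inverse_branch hAU' hA hcrit isOpen_ball hscb hrA hN hx
  have hderiv : deriv (g^[N]) z₀ * deriv h (g^[N] z₀) = 1 := by
    have hg : DifferentiableAt ℂ (g^[N]) (h (g^[N] z₀)) :=
      hhx.symm ▸ (H.analyticAt_iterate hN).differentiableAt
    rw [← (hinv.eventuallyEq_of_mem (ball_mem_nhds _ hr)).deriv_eq.trans (deriv_id _),
      deriv_comp _ hg (hd.differentiableAt (ball_mem_nhds _ hr)), hhx]
  refine hlt.not_ge ?_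
  calc r = ‖deriv (g^[N]) z₀ * deriv h (g^[N] z₀)‖ * r := by rw [hderiv, norm_one, one_mul]
    _ = ‖deriv h (g^[N] z₀)‖ * r * ‖deriv (g^[N]) z₀‖ := by rw [norm_mul]; ring
    _ ≤ C * ‖deriv (g^[N]) z₀‖ := by gcongr; exact hC _ _ h hr hd (hhA.mono_right hAU') hhx

lemma isCompact_iterateDomain_inter_preimage {K : Set ℂ} (hK : IsCompact K) (hKU : K ⊆ U)
    (n : ℕ) : IsCompact (iterateDomain g U' n ∩ g^[n] ⁻¹' K) := by
  suffices h : IsCompact (iterateDomain g U' n ∩ g^[n] ⁻¹' K) ∧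
      iterateDomain g U' n ∩ g^[n] ⁻¹' K ⊆ U from h.1
  induction n with
  | zero => simpa [iterateDomain] using ⟨hK, hKU⟩
  | succ n ih =>
    rw [iterateDomain_succ, iterate_succ, preimage_comp, inter_assoc, ← preimage_inter]
    exact ⟨H.proper _ ih.2 ih.1, inter_subset_left.trans H.subset⟩

lemma not_eventually_iterate_eq_self (hU : IsPreconnected U) (hne : U' ≠ U) {a : ℂ} {P : ℕ}
    (hP : P ≠ 0) (ha : a ∈ iterateDomain g U' P) : ¬ ∀ᶠ z in 𝓝 a, g^[P] z = z := by
  intro hid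
  have hDU' : iterateDomain g U' P ⊆ U' := fun z hz => hz 0 (Nat.pos_of_ne_zero hP)
  refine hne (H.subset.antisymm (.trans ?_ hDU'))
  let W : Set ℂ := iterateDomain g U' P ∩ {z | ∀ᶠ w in 𝓝 z, g^[P] w = w}
  have hW : IsOpen W :=
    (isOpen_iterateDomain H.isOpen_source H.differentiableOn.continuousOn P).inter
      isOpen_setOfPred_eventually_nhds
  refine .trans ?_ (inter_subset_left : W ⊆ _)
  refine hU.subset_of_closure_inter_subset hW ⟨a, H.subset (hDU' ha), ha, hid⟩ ?_
  rintro b ⟨hbW, hbU⟩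
  by_contra hb
  obtain ⟨K, hK, hbK, hKU⟩ := exists_compact_subset H.isOpen_target hbU
  have hfreq : ∃ᶠ w in 𝓝 b, w ∈ W ∧ w ∈ K :=
    (mem_closure_iff_frequently.1 hbW).and_eventually (mem_interior_iff_mem_nhds.1 hbK)
  have hbP : b ∈ iterateDomain g U' P := by
    have hclosed := (H.isCompact_iterateDomain_inter_preimage hK hKU P).isClosed
    refine (hclosed.mem_of_frequently_of_tendsto (hfreq.mono ?_) tendsto_id).1
    rintro w ⟨⟨hw, hfix⟩, hwK⟩
    exact ⟨hw, by rwa [mem_preimage, id_eq, hfix.self_of_nhds]⟩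
  refine hb ⟨hbP, ((H.analyticAt_iterate hbP).frequently_eq_iff_eventually_eq
    (g := fun z => z) analyticAt_id).1 (frequently_nhdsWithin_iff.2 (hfreq.mono ?_))⟩
  rintro w ⟨hw, -⟩
  exact ⟨hw.2.self_of_nhds, fun h => hb (h ▸ hw)⟩

end IsProperHolomorphic

section Basins

variable {g : ℂ → ℂ} {U' : Set ℂ} {a z : ℂ} {P : ℕ}

lemma iterate_mem_cycleSet (hz : z ∈ cycleSet g a) (n : ℕ) : g^[n] z ∈ cycleSet g a := by
  obtain ⟨m, rfl⟩ := hz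
  exact ⟨n + m, iterate_add_apply g n m a⟩

lemma attractedTo_of_image (hz : z ∈ U') (h : attractedTo g U' a (g z)) : attractedTo g U' a z :=
  ⟨Nat.rec hz fun n _ => h.1 n,
    (tendsto_add_atTop_iff_nat (f := fun n => infDist (g^[n] z) (cycleSet g a)) 1).1 h.2⟩

lemma attractedTo_of_tendsto (hP : P ≠ 0) (hcont : ∀ j < P, ContinuousAt (g^[j]) a)
    (hmem : ∀ n, (g^[P])^[n] z ∈ iterateDomain g U' P)
    (hlim : Tendsto (fun n => (g^[P])^[n] z) atTop (𝓝 a)) : attractedTo g U' a z := by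
  have hmod : ∀ n, n % P < P := fun n => Nat.mod_lt n (Nat.pos_of_ne_zero hP)
  have hiter : ∀ n, g^[n] z = g^[n % P] ((g^[P])^[n / P] z) := fun n => by
    rw [← iterate_mul, ← iterate_add_apply, Nat.mod_add_div]
  refine ⟨fun n => hiter n ▸ hmem _ _ (hmod n), ?_⟩
  let err : ℂ → ℝ := fun w => ∑ j ∈ Finset.range P, dist (g^[j] w) (g^[j] a)
  have herr : Tendsto err (𝓝 a) (𝓝 0) := by
    rw [← Finset.sum_const_zero (s := Finset.range P)]
    exact tendsto_finsetSum _ fun j hj =>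
      tendsto_iff_dist_tendsto_zero.1 (hcont j (Finset.mem_range.1 hj))
  refine squeeze_zero (fun _ => infDist_nonneg) (fun n => ?_)
    (herr.comp (hlim.comp (Nat.tendsto_div_const_atTop hP)))
  calc infDist (g^[n] z) (cycleSet g a)
      ≤ dist (g^[n % P] ((g^[P])^[n / P] z)) (g^[n % P] a) :=
        hiter n ▸ infDist_le_dist_of_mem (mem_range_self (n % P))
    _ ≤ err ((g^[P])^[n / P] z) :=
        Finset.single_le_sum (f := fun j => dist (g^[j] ((g^[P])^[n / P] z)) (g^[j] a))
          (fun _ _ => dist_nonneg) (Finset.mem_range.2 (hmod n))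

lemma iterate_notMem_cycleSet_of_tendsto (hper : g^[P] a = a) (hne : ∀ n, (g^[P])^[n] z ≠ a)
    (hP : P ≠ 0) (hlim : Tendsto (fun n => (g^[P])^[n] z) atTop (𝓝 a)) (n : ℕ) :
    g^[n] z ∉ cycleSet g a := by
  intro hn
  have hmem : (g^[P])^[n] z ∈ cycleSet g a := by
    rw [← iterate_mul, ← Nat.sub_add_cancel (Nat.le_mul_of_pos_left n (Nat.pos_of_ne_zero hP)),
      iterate_add_apply]
    exact iterate_mem_cycleSet hn _
  obtain ⟨m, hm⟩ := hmem
  have hfix : IsFixedPt (g^[P]) ((g^[P])^[n] z) :=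
    hm ▸ IsFixedPt.map hper ((Function.Commute.refl g).iterate_iterate m P)
  refine hne n (tendsto_nhds_unique tendsto_const_nhds
    (((tendsto_add_atTop_iff_nat n).2 hlim).congr fun k => ?_))
  rw [iterate_add_apply, hfix.iterate k]

end Basins

lemma exists_ball_tendsto_of_hasDerivAt {𝕜 : Type*} [NontriviallyNormedField 𝕜] {f : 𝕜 → 𝕜}
    {a f' : 𝕜} {s : Set 𝕜} (hf : HasDerivAt f f' a) (hfix : f a = a) (hf' : ‖f'‖ < 1)
    (hs : s ∈ 𝓝 a) :
    ∃ r > 0, ∀ z ∈ ball a r, (∀ n, f^[n] z ∈ s) ∧ Tendsto (fun n => f^[n] z) atTop (𝓝 a) := by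
  obtain ⟨q, hf'q, hq1⟩ := exists_between hf'
  have hq0 : 0 ≤ q := (norm_nonneg _).trans hf'q.le
  have hcontr : ∀ᶠ z in 𝓝 a, dist (f z) a ≤ q * dist z a := by
    have hslope : ContinuousAt (dslope f a) a := continuousAt_dslope_same.2 hf.differentiableAt
    have hlt : ‖dslope f a a‖ < q := by rwa [dslope_same, hf.deriv]
    filter_upwards [hslope.norm.eventually_lt_const hlt] with z hz
    rw [dist_eq_norm, dist_eq_norm, ← congrArg (f z - ·) hfix, ← sub_smul_dslope, smul_eq_mul,
      norm_mul, mul_comm]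
    gcongr
  obtain ⟨r, hr, hball⟩ := Metric.eventually_nhds_iff_ball.1 (hcontr.and hs)
  refine ⟨r, hr, fun z hz => ?_⟩
  have hdist : ∀ n, f^[n] z ∈ ball a r ∧ dist (f^[n] z) a ≤ q ^ n * dist z a := by
    intro n
    induction n with
    | zero => simpa using hz
    | succ n ih =>
      rw [iterate_succ_apply']
      have hstep := (hball _ ih.1).1
      have hle := hstep.trans (mul_le_of_le_one_left dist_nonneg hq1.le)
      refine ⟨mem_ball.2 (hle.trans_lt ih.1), ?_⟩
      calc _ ≤ q * (q ^ n * dist z a) := hstep.trans (by gcongr; exact ih.2)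
        _ = _ := by ring
  refine ⟨fun n => (hball _ (hdist n).1).2, tendsto_iff_dist_tendsto_zero.2 ?_⟩
  refine squeeze_zero (fun _ => dist_nonneg) (fun n => (hdist n).2) ?_
  simpa using (tendsto_pow_atTop_nhds_zero_of_lt_one hq0 hq1).mul_const (dist z a)

lemma IsProperHolomorphic.exists_critPts_attractedTo {g : ℂ → ℂ} {U' U : Set ℂ}
    (H : IsProperHolomorphic g U' U) (hsc : IsSimplyConnected U') (hne : U' ≠ univ) {a : ℂ} {p : ℕ}
    (hp : p ≠ 0) (horb : ∀ n : ℕ, g^[n] a ∈ U') (hper : g^[p] a = a)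
    (hmul : ‖deriv (g^[p]) a‖ < 1) : ∃ c ∈ critPts g U', attractedTo g U' a c := by
  have hdom : ∀ n, a ∈ iterateDomain g U' n := fun n i _ => horb i
  have hderiv : HasDerivAt (g^[p]) (deriv (g^[p]) a) a :=
    (H.analyticAt_iterate (hdom p)).differentiableAt.hasDerivAt
  have hopen := isOpen_iterateDomain H.isOpen_source H.differentiableOn.continuousOn p
  obtain ⟨r, hr, hball⟩ :=
    exists_ball_tendsto_of_hasDerivAt hderiv hper hmul (hopen.mem_nhds (hdom p))
  obtain ⟨c, hc, hca⟩ := H.inter_critPts_nonempty (A := {z | attractedTo g U' a z}) (z₀ := a) hsc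
    hne (fun z hz => hz.1 0) (fun z hz => attractedTo_of_image hz.1 hz.2) (horb 0) fun C => by
      have hlim : Tendsto (fun n : ℕ => C * ‖deriv (g^[p]) a‖ ^ n) atTop (𝓝 0) := by
        simpa using (tendsto_pow_atTop_nhds_zero_of_lt_one (norm_nonneg _) hmul).const_mul C
      obtain ⟨n, hn⟩ := (hlim.eventually_lt_const hr).exists
      refine ⟨p * n, r, hdom _, hr, ?_, ?_⟩
      · rw [iterate_mul, iterate_fixed hper]
        exact fun z hz => attractedTo_of_tendsto hp
          (fun j _ => (H.analyticAt_iterate (hdom j)).continuousAt) (hball z hz).1 (hball z hz).2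
      · rwa [iterate_mul, (hderiv.iterate a hper n).deriv, norm_pow]
  exact ⟨c, hc, hca⟩

section FatouCoordinate

/-- The approximate Fatou coordinate `-1 / (c (z - a) ^ m)` of a germ
`z + (z - a) ^ (m + 1) * (c / m + o(1))`: in this coordinate the germ is close to the translation
by `1`. -/
def fatouCoord (c a : ℂ) (m : ℕ) (z : ℂ) : ℂ := -(c * (z - a) ^ m)⁻¹

variable {c a : ℂ} {m : ℕ}

lemma exists_fatouCoord_eq (hc : c ≠ 0) (hm : m ≠ 0) {w : ℂ} (hw : w ≠ 0) :
    ∃ z, fatouCoord c a m z = w := by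
  obtain ⟨x, hx⟩ := IsAlgClosed.exists_pow_nat_eq (-(c * w)⁻¹) (Nat.pos_of_ne_zero hm)
  refine ⟨a + x, ?_⟩
  rw [fatouCoord, add_sub_cancel_left, hx]
  field_simp

lemma comap_re_fatouCoord_le (hc : c ≠ 0) (hm : m ≠ 0) :
    comap (fun z => (fatouCoord c a m z).re) atTop ≤ 𝓝[≠] a := by
  refine le_inf (nhds_basis_ball.ge_iff.2 fun ε hε => ?_) (le_principal_iff.2 ?_)
  · refine mem_comap.2 ⟨_, Ioi_mem_atTop (‖c‖ * ε ^ m)⁻¹, fun z hz => ?_⟩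
    by_contra hzε
    rw [mem_ball_iff_norm, not_lt] at hzε
    refine (lt_of_lt_of_le hz (Complex.re_le_norm _)).not_ge ?_
    rw [fatouCoord, norm_neg, norm_inv, norm_mul, norm_pow]
    gcongr
  · refine mem_comap.2 ⟨_, Ioi_mem_atTop 0, fun z hz hza => ?_⟩
    rw [mem_singleton_iff] at hza
    simp [fatouCoord, hza, hm] at hz

lemma exists_norm_fatouCoord_sub_le (c a : ℂ) (m : ℕ) :
    ∃ κ > 0, ∀ z z', ‖z' - z‖ < κ * ‖z - a‖ →
      ‖fatouCoord c a m z' - fatouCoord c a m z‖ ≤ ‖fatouCoord c a m z‖ / 4 := by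
  have hcont : ContinuousAt (fun x : ℂ => ‖((1 + x) ^ m)⁻¹ - 1‖) 0 := by
    fun_prop (disch := simp)
  obtain ⟨κ, hκ, hball⟩ := Metric.eventually_nhds_iff_ball.1
    (hcont.eventually_lt_const (u := 1 / 4) (by simp))
  refine ⟨κ, hκ, fun z z' hz => ?_⟩
  have hza : 0 < ‖z - a‖ := pos_of_mul_pos_right ((norm_nonneg _).trans_lt hz) hκ.le
  have hx : (z' - z) / (z - a) ∈ ball (0 : ℂ) κ := by
    rwa [mem_ball_zero_iff, norm_div, div_lt_iff₀ hza]
  have hz' : z' - a = (z - a) * (1 + (z' - z) / (z - a)) := by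
    field_simp [norm_pos_iff.1 hza]
    ring
  have hsub : fatouCoord c a m z' - fatouCoord c a m z =
      fatouCoord c a m z * (((1 + (z' - z) / (z - a)) ^ m)⁻¹ - 1) := by
    rw [fatouCoord, fatouCoord, hz', mul_pow, ← mul_assoc, mul_inv]
    ring
  rw [hsub, norm_mul, div_eq_mul_one_div ‖fatouCoord c a m z‖]
  exact mul_le_mul_of_nonneg_left (hball _ hx).le (norm_nonneg _)

end FatouCoordinate

section ParabolicGerms

/-- `f` is the parabolic germ `z + (z - a) ^ (m + 1) * k z` of multiplier one at `a`, with `k`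
analytic and nonvanishing at `a`; `m` is the number of its attracting petals. -/
structure IsParabolicGerm (f k : ℂ → ℂ) (a : ℂ) (m : ℕ) : Prop where
  analyticAt : AnalyticAt ℂ k a
  factor_ne_zero : k a ≠ 0
  mult_ne_zero : m ≠ 0
  eventuallyEq : f =ᶠ[𝓝 a] fun z => z + (z - a) ^ (m + 1) * k z

lemma exists_isParabolicGerm {f : ℂ → ℂ} {a : ℂ} (hf : AnalyticAt ℂ f a) (hfa : f a = a)
    (hf' : deriv f a = 1) (hid : ¬ ∀ᶠ z in 𝓝 a, f z = z) : ∃ k m, IsParabolicGerm f k a m := by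
  obtain ⟨n, k, hk, hk0, hfk⟩ := (hf.sub analyticAt_id).exists_eventuallyEq_pow_smul_nonzero_iff.2
    fun h => hid (h.mono fun z hz => sub_eq_zero.1 hz)
  match n with
  | 0 =>
    have hfk' := hfk.self_of_nhds
    simp only [Pi.sub_apply, id_eq, hfa, sub_self, pow_zero, one_smul] at hfk'
    exact absurd hfk'.symm hk0
  | 1 =>
    have hderiv : HasDerivAt (f - id) (1 * k a + (a - a) * deriv k a) a :=
      (((hasDerivAt_id a).sub_const a).mul hk.differentiableAt.hasDerivAt).congr_of_eventuallyEq
        (hfk.mono fun z hz => by simpa using hz)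
    have hk0' := hderiv.unique (hf.differentiableAt.hasDerivAt.sub (hasDerivAt_id a))
    rw [hf', sub_self, sub_self, zero_mul, one_mul, add_zero] at hk0'
    exact absurd hk0' hk0
  | m + 2 =>
    refine ⟨k, m + 1, hk, hk0, m.succ_ne_zero, hfk.mono fun z hz => eq_add_of_sub_eq' hz⟩

lemma eventually_norm_one_add_mul_le_one {α : Type*} {l : Filter α} {u ℓ : α → ℂ} {c : ℝ}
    (hu : Tendsto u l (𝓝 0)) (hℓ : Tendsto ℓ l (𝓝 c)) (hc : 0 < c) :
    ∀ᶠ z in l, (u z).re ≤ -(‖u z‖ / 2) → ‖1 + u z * ℓ z‖ ≤ 1 := by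
  have hsq : Tendsto (fun z => ‖u z‖ * ‖ℓ z‖ ^ 2) l (𝓝 0) := by
    simpa using hu.norm.mul (hℓ.norm.pow 2)
  have hsub : Tendsto (fun z => ‖ℓ z - c‖) l (𝓝 0) := tendsto_iff_norm_sub_tendsto_zero.1 hℓ
  filter_upwards [hsq.eventually_lt_const (half_pos hc),
    hsub.eventually_lt_const (show 0 < c / 8 by positivity)] with z hz hzc hre
  have hexpand : ‖1 + u z * ℓ z‖ ^ 2 = 1 + 2 * (u z * ℓ z).re + ‖u z * ℓ z‖ ^ 2 := by
    rw [Complex.sq_norm, Complex.sq_norm, Complex.normSq_add]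
    simp
    ring
  have hre' : (u z * ℓ z).re ≤ c * (u z).re + ‖u z‖ * (c / 8) := by
    calc (u z * ℓ z).re = c * (u z).re + (u z * (ℓ z - c)).re := by simp; ring
      _ ≤ c * (u z).re + ‖u z‖ * ‖ℓ z - c‖ := by
        rw [← norm_mul]; gcongr; exact Complex.re_le_norm _
      _ ≤ _ := by gcongr
  have hsq' : ‖u z * ℓ z‖ ^ 2 ≤ ‖u z‖ * (c / 2) := by
    calc ‖u z * ℓ z‖ ^ 2 = ‖u z‖ * (‖u z‖ * ‖ℓ z‖ ^ 2) := by rw [norm_mul]; ring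
      _ ≤ _ := by gcongr
  have hmul : c * (u z).re ≤ c * -(‖u z‖ / 2) := by gcongr
  have hpos : 0 ≤ c * ‖u z‖ := by positivity
  refine (sq_le_one_iff₀ (norm_nonneg _)).1 ?_
  rw [hexpand]
  linarith

lemma re_le_of_norm_neg_inv_le {w : ℂ} (hw : ‖-w⁻¹‖ ≤ 2 * (-w⁻¹).re) : w.re ≤ -(‖w‖ / 2) := by
  rcases eq_or_ne w 0 with rfl | hw0
  · simp
  · have hw0 : 0 < ‖w‖ := norm_pos_iff.2 hw0
    rw [norm_neg, norm_inv, Complex.neg_re, Complex.inv_re, Complex.normSq_eq_norm_sq] at hw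
    field_simp at hw
    linarith

namespace IsParabolicGerm

variable {f k : ℂ → ℂ} {a : ℂ} {m : ℕ} (hf : IsParabolicGerm f k a m)
include hf

lemma coeff_ne_zero : m * k a ≠ 0 :=
  mul_ne_zero (Nat.cast_ne_zero.2 hf.mult_ne_zero) hf.factor_ne_zero

lemma tendsto_sub_pow : Tendsto (fun z => (z - a) ^ m) (𝓝 a) (𝓝 0) := by
  have hcont : ContinuousAt (fun z => (z - a) ^ m) a := by fun_prop
  simpa [hf.mult_ne_zero] using hcont.tendsto

lemma eventually_sub_eq : ∀ᶠ z in 𝓝 a, f z - a = (z - a) * (1 + (z - a) ^ m * k z) := by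
  filter_upwards [hf.eventuallyEq] with z hz
  rw [hz]
  ring

lemma eventually_deriv_eq :
    ∀ᶠ z in 𝓝 a, deriv f z = 1 + (z - a) ^ m * ((m + 1) * k z + (z - a) * deriv k z) := by
  filter_upwards [hf.eventuallyEq.eventuallyEq_nhds, hf.analyticAt.eventually_analyticAt]
    with z hfz hkz
  have hderiv := (hasDerivAt_id z).add ((((hasDerivAt_id z).sub_const a).pow (m + 1)).mul
    hkz.differentiableAt.hasDerivAt)
  refine (hderiv.congr_of_eventuallyEq hfz).deriv.trans ?_
  simp only [Pi.pow_apply, id_eq, add_tsub_cancel_right, Nat.cast_add, Nat.cast_one]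
  ring

lemma tendsto_fatouCoord_sub :
    Tendsto (fun z => fatouCoord (m * k a) a m (f z) - fatouCoord (m * k a) a m z)
      (𝓝[≠] a) (𝓝 1) := by
  let G : ℂ → ℂ := fun s => ((1 + s) ^ m)⁻¹
  have hG : HasDerivAt G (-m) 0 := by
    simpa using (((hasDerivAt_id (0 : ℂ)).const_add 1).fun_pow m).fun_inv (by simp)
  have hslope : Tendsto (dslope G 0) (𝓝 0) (𝓝 (-m)) := by
    simpa [hG.deriv] using (continuousAt_dslope_same.2 hG.differentiableAt).tendsto
  have hk : Tendsto k (𝓝 a) (𝓝 (k a)) := hf.analyticAt.continuousAt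
  have harg : Tendsto (fun z => (z - a) ^ m * k z) (𝓝 a) (𝓝 0) := by
    simpa using hf.tendsto_sub_pow.mul hk
  have hlim : Tendsto (fun z => -(k z / (m * k a)) * dslope G 0 ((z - a) ^ m * k z)) (𝓝[≠] a)
      (𝓝 (-(k a / (m * k a)) * -m)) :=
    ((hk.div_const _).neg.mul (hslope.comp harg)).mono_left nhdsWithin_le_nhds
  have hone : -(k a / (m * k a)) * -(m : ℂ) = 1 := by
    field_simp [hf.factor_ne_zero, Nat.cast_ne_zero.2 hf.mult_ne_zero]
  rw [hone] at hlim
  refine hlim.congr' ?_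
  filter_upwards [hf.eventually_sub_eq.filter_mono nhdsWithin_le_nhds, self_mem_nhdsWithin]
    with z hfz hza
  have hza : z - a ≠ 0 := sub_ne_zero.2 hza
  have hGz := sub_smul_dslope G 0 ((z - a) ^ m * k z)
  have hk0 := hf.factor_ne_zero
  have hm0 : (m : ℂ) ≠ 0 := Nat.cast_ne_zero.2 hf.mult_ne_zero
  have hGz' : (z - a) ^ m * k z * dslope G 0 ((z - a) ^ m * k z) =
      ((1 + (z - a) ^ m * k z) ^ m)⁻¹ - 1 := by
    simpa [G] using hGz
  have hsplit : fatouCoord (m * k a) a m (f z) - fatouCoord (m * k a) a m z =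
      -(m * k a * (z - a) ^ m)⁻¹ * (((1 + (z - a) ^ m * k z) ^ m)⁻¹ - 1) := by
    rw [fatouCoord, fatouCoord, hfz, mul_pow, ← mul_assoc, mul_inv]
    ring
  rw [hsplit, ← hGz']
  field_simp

lemma exists_deriv_sq_mul_eq :
    ∃ ℓ : ℂ → ℂ, Tendsto ℓ (𝓝 a) (𝓝 ((2 * m - 1) / m : ℝ)) ∧ ∀ᶠ z in 𝓝 a,
      deriv f z ^ 2 * (z - a) ^ 3 = (f z - a) ^ 3 * (1 + m * k a * (z - a) ^ m * ℓ z) := by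
  have hk := hf.analyticAt.continuousAt
  have hk' := hf.analyticAt.deriv.continuousAt
  have hk0 := hf.factor_ne_zero
  have hm0 : (m : ℂ) ≠ 0 := Nat.cast_ne_zero.2 hf.mult_ne_zero
  let p : ℂ → ℂ := fun z => (m + 1) * k z + (z - a) * deriv k z
  have hp : ContinuousAt p a := by fun_prop
  let ℓ : ℂ → ℂ := fun z => (2 * p z - 3 * k z +
    (z - a) ^ m * (p z ^ 2 - 3 * k z ^ 2 - (z - a) ^ m * k z ^ 3)) /
      (m * k a * (1 + (z - a) ^ m * k z) ^ 3)
  have hℓ : ContinuousAt ℓ a := by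
    fun_prop (disch := simp [hf.mult_ne_zero, hf.factor_ne_zero])
  have hℓa : ℓ a = ((2 * m - 1) / m : ℝ) := by
    simp only [ℓ, p, sub_self, zero_mul, zero_pow hf.mult_ne_zero, add_zero, one_pow, mul_one]
    push_cast
    field_simp
    ring
  have hY : ∀ᶠ z in 𝓝 a, 1 + (z - a) ^ m * k z ≠ 0 :=
    ContinuousAt.eventually_ne (by fun_prop) (by simp [hf.mult_ne_zero])
  refine ⟨ℓ, hℓa ▸ hℓ.tendsto, ?_⟩
  filter_upwards [hf.eventually_sub_eq, hf.eventually_deriv_eq, hY] with z hfz hderiv hYz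
  rw [hfz, show deriv f z = 1 + (z - a) ^ m * p z from hderiv]
  simp only [ℓ]
  field_simp
  ring

lemma eventually_norm_deriv_sq_mul_le :
    ∀ᶠ z in 𝓝 a, ‖fatouCoord (m * k a) a m z‖ ≤ 2 * (fatouCoord (m * k a) a m z).re →
      ‖deriv f z‖ ^ 2 * ‖z - a‖ ^ 3 ≤ ‖f z - a‖ ^ 3 := by
  obtain ⟨ℓ, hℓ, hderiv⟩ := hf.exists_deriv_sq_mul_eq
  have hu : Tendsto (fun z => m * k a * (z - a) ^ m) (𝓝 a) (𝓝 0) := by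
    simpa using hf.tendsto_sub_pow.const_mul (m * k a)
  have hm : (1 : ℝ) ≤ m := Nat.one_le_cast.2 (Nat.one_le_iff_ne_zero.2 hf.mult_ne_zero)
  filter_upwards [hderiv, eventually_norm_one_add_mul_le_one hu hℓ
    (div_pos (by linarith) (by linarith))] with z hderivz hle hv
  calc ‖deriv f z‖ ^ 2 * ‖z - a‖ ^ 3
      = ‖f z - a‖ ^ 3 * ‖1 + m * k a * (z - a) ^ m * ℓ z‖ := by
        simpa only [norm_mul, norm_pow] using congrArg norm hderivz
    _ ≤ ‖f z - a‖ ^ 3 :=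
        mul_le_of_le_one_right (by positivity) (hle (re_le_of_norm_neg_inv_le hv))

end IsParabolicGerm

end ParabolicGerms

section Petals

/-- The preimage of the right half-plane `re > R` under a coordinate `v`; for a Fatou coordinate,
the union of the attracting petals. -/
def petal {α : Type*} (v : α → ℂ) (R : ℝ) : Set α := {z | R < (v z).re}

/-- The part of `petal v R` lying over the sector `‖w‖ ≤ 2 re w`, on which `v z` stays at a distance
comparable to `‖v z‖` from the boundary of the half-plane. -/
def petalCore {α : Type*} (v : α → ℂ) (R : ℝ) : Set α := {z ∈ petal v R | ‖v z‖ ≤ 2 * (v z).re}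

section Translation

variable {α : Type*} {f : α → α} {v : α → ℂ} {R : ℝ}
  (hstep : ∀ z ∈ petal v R, ‖v (f z) - v z - 1‖ ≤ 1 / 4)
include hstep

lemma re_add_le_of_mem_petal {z : α} (hz : z ∈ petal v R) : (v z).re + 3 / 4 ≤ (v (f z)).re := by
  have hre := (abs_le.1 ((Complex.abs_re_le_norm _).trans (hstep z hz))).1
  rw [Complex.sub_re, Complex.sub_re, Complex.one_re] at hre
  linarith

lemma mapsTo_petal : MapsTo f (petal v R) (petal v R) := fun z hz => by
  change R < (v (f z)).re
  linarith [re_add_le_of_mem_petal hstep hz, show R < (v z).re from hz]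

lemma mapsTo_petalCore {R' : ℝ} (hR : R ≤ R') : MapsTo f (petalCore v R') (petalCore v R') :=
  fun z ⟨hzR, hz⟩ => by
    have hzR' : R' < (v z).re := hzR
    have hzp : z ∈ petal v R := hR.trans_lt hzR'
    have hre := re_add_le_of_mem_petal hstep hzp
    have hnorm : ‖v (f z)‖ ≤ ‖v z‖ + 5 / 4 := by
      calc ‖v (f z)‖ = ‖v z + 1 + (v (f z) - v z - 1)‖ := by congr 1; ring
        _ ≤ ‖v z‖ + ‖(1 : ℂ)‖ + ‖v (f z) - v z - 1‖ := norm_add₃_le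
        _ ≤ ‖v z‖ + 5 / 4 := by rw [norm_one]; linarith [hstep z hzp]
    refine ⟨?_, ?_⟩
    · change R' < (v (f z)).re
      linarith
    · linarith

lemma tendsto_re_iterate_atTop {z : α} (hz : z ∈ petal v R) :
    Tendsto (fun n => (v (f^[n] z)).re) atTop atTop := by
  have hle : ∀ n : ℕ, (v z).re + n * (3 / 4) ≤ (v (f^[n] z)).re := by
    intro n
    induction n with
    | zero => simp
    | succ n ih =>
      have hre := re_add_le_of_mem_petal hstep ((mapsTo_petal hstep).iterate n hz)
      rw [iterate_succ_apply']
      push_cast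
      linarith
  exact tendsto_atTop_mono hle (tendsto_atTop_add_const_left _ _
    (tendsto_natCast_atTop_atTop.atTop_mul_const (by norm_num)))

end Translation

lemma ball_subset_petal {c a z : ℂ} {m : ℕ} {κ R : ℝ}
    (hκ : ∀ z z', ‖z' - z‖ < κ * ‖z - a‖ →
      ‖fatouCoord c a m z' - fatouCoord c a m z‖ ≤ ‖fatouCoord c a m z‖ / 4)
    (hz : z ∈ petalCore (fatouCoord c a m) (2 * R)) :
    ball z (κ * ‖z - a‖) ⊆ petal (fatouCoord c a m) R := fun z' hz' => by
  have hre := (abs_le.1 ((Complex.abs_re_le_norm _).trans (hκ z z' (mem_ball_iff_norm.1 hz')))).1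
  rw [Complex.sub_re] at hre
  have hzR : 2 * R < (fatouCoord c a m z).re := hz.1
  change R < (fatouCoord c a m z').re
  linarith [hz.2]

lemma petalCore_fatouCoord_nonempty {c : ℂ} {m : ℕ} (hc : c ≠ 0) (hm : m ≠ 0) (a : ℂ) (R : ℝ) :
    (petalCore (fatouCoord c a m) R).Nonempty := by
  have hpos : 0 < |R| + 1 := by positivity
  obtain ⟨z, hz⟩ := exists_fatouCoord_eq (a := a) hc hm
    (Complex.ofReal_ne_zero.2 hpos.ne')
  refine ⟨z, ?_, ?_⟩
  · change R < (fatouCoord c a m z).re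
    rw [hz, Complex.ofReal_re]
    linarith [le_abs_self R]
  · rw [hz, Complex.ofReal_re, Complex.norm_of_nonneg hpos.le]
    linarith

/-- `S` is an attracting petal, or a union of several, at the fixed point `a` of `f`, and `T` is a
forward invariant part well inside `S` on which `f` does not expand the metric
`|dz| / |z - a| ^ (3 / 2)`. -/
structure IsAttractingPetal (f : ℂ → ℂ) (a : ℂ) (κ : ℝ) (S T : Set ℂ) : Prop where
  notMem : a ∉ S
  mapsTo : MapsTo f S S
  tendsto : ∀ z ∈ S, Tendsto (fun n => f^[n] z) atTop (𝓝 a)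
  core_subset : T ⊆ S
  core_nonempty : T.Nonempty
  mapsTo_core : MapsTo f T T
  ball_subset : ∀ z ∈ T, ball z (κ * ‖z - a‖) ⊆ S
  norm_deriv_sq_mul_le : ∀ z ∈ T, ‖deriv f z‖ ^ 2 * ‖z - a‖ ^ 3 ≤ ‖f z - a‖ ^ 3

lemma IsParabolicGerm.exists_isAttractingPetal {f k : ℂ → ℂ} {a : ℂ} {m : ℕ}
    (hf : IsParabolicGerm f k a m) {s : Set ℂ} (hs : s ∈ 𝓝 a) :
    ∃ κ > 0, ∃ S ⊆ s, ∃ T, IsAttractingPetal f a κ S T := by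
  have hc := hf.coeff_ne_zero
  set v : ℂ → ℂ := fatouCoord (m * k a) a m with hv
  have hcomap : comap (fun z => (v z).re) atTop ≤ 𝓝[≠] a :=
    comap_re_fatouCoord_le hc hf.mult_ne_zero
  have hstep : ∀ᶠ z in 𝓝[≠] a, ‖v (f z) - v z - 1‖ ≤ 1 / 4 :=
    (tendsto_iff_norm_sub_tendsto_zero.1 hf.tendsto_fatouCoord_sub).eventually_le_const
      (by norm_num)
  have hnear := hcomap (hstep.and ((eventually_mem_set.2 hs).and
    hf.eventually_norm_deriv_sq_mul_le |>.filter_mono nhdsWithin_le_nhds))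
  obtain ⟨R, hR, hpetal⟩ := ((atTop_basis_Ioi' (0 : ℝ)).comap _).mem_iff.1 hnear
  have hstepR : ∀ z ∈ petal v R, ‖v (f z) - v z - 1‖ ≤ 1 / 4 := fun z hz => (hpetal hz).1
  have hR0 : R ≤ 2 * R := by linarith
  have hcore : petalCore v (2 * R) ⊆ petal v R := fun z hz => hR0.trans_lt hz.1
  obtain ⟨κ, hκ, hball⟩ := exists_norm_fatouCoord_sub_le (m * k a) a m
  refine ⟨κ, hκ, petal v R, fun z hz => (hpetal hz).2.1, petalCore v (2 * R), ?_⟩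
  exact
    { notMem := fun ha => by
        have hva : R < (v a).re := ha
        simp [hv, fatouCoord, hf.mult_ne_zero] at hva
        linarith
      mapsTo := mapsTo_petal hstepR
      tendsto := fun z hz =>
        (tendsto_comap_iff (g := fun z => (v z).re)).2 (tendsto_re_iterate_atTop hstepR hz)
          |>.mono_right (hcomap.trans nhdsWithin_le_nhds)
      core_subset := hcore
      core_nonempty := petalCore_fatouCoord_nonempty hc hf.mult_ne_zero a _
      mapsTo_core := mapsTo_petalCore hstepR hR0
      ball_subset := fun z => ball_subset_petal hball
      norm_deriv_sq_mul_le := fun z hz => (hpetal (hcore hz)).2.2 hz.2 }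

namespace IsAttractingPetal

variable {f : ℂ → ℂ} {a z : ℂ} {κ : ℝ} {S T : Set ℂ} (hS : IsAttractingPetal f a κ S T)
  (hf : ∀ z ∈ T, DifferentiableAt ℂ f z) (hz : z ∈ T)
include hS hz

lemma norm_iterate_sub_pos (n : ℕ) : 0 < ‖f^[n] z - a‖ := by
  refine norm_pos_iff.2 (sub_ne_zero.2 fun h => hS.notMem ?_)
  exact h ▸ hS.core_subset (hS.mapsTo_core.iterate n hz)

include hf

lemma hasDerivAt_iterate (n : ℕ) :
    HasDerivAt (f^[n + 1]) (deriv f (f^[n] z) * deriv (f^[n]) z) z := by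
  have hdiff : DifferentiableAt ℂ (f^[n]) z := by
    induction n with
    | zero => exact differentiableAt_id
    | succ n ih =>
      rw [iterate_succ']
      exact (hf _ (hS.mapsTo_core.iterate n hz)).comp z ih
  rw [iterate_succ']
  exact (hf _ (hS.mapsTo_core.iterate n hz)).hasDerivAt.comp z hdiff.hasDerivAt

lemma norm_deriv_iterate_sq_mul_le (n : ℕ) :
    ‖deriv (f^[n]) z‖ ^ 2 * ‖z - a‖ ^ 3 ≤ ‖f^[n] z - a‖ ^ 3 := by
  induction n with
  | zero => simp
  | succ n ih =>
    rw [(hS.hasDerivAt_iterate hf hz n).deriv, norm_mul, iterate_succ_apply']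
    calc (‖deriv f (f^[n] z)‖ * ‖deriv (f^[n]) z‖) ^ 2 * ‖z - a‖ ^ 3
        = ‖deriv f (f^[n] z)‖ ^ 2 * (‖deriv (f^[n]) z‖ ^ 2 * ‖z - a‖ ^ 3) := by ring
      _ ≤ ‖deriv f (f^[n] z)‖ ^ 2 * ‖f^[n] z - a‖ ^ 3 := by gcongr
      _ ≤ ‖f (f^[n] z) - a‖ ^ 3 := hS.norm_deriv_sq_mul_le _ (hS.mapsTo_core.iterate n hz)

lemma exists_mul_norm_deriv_iterate_lt (hκ : 0 < κ) (C : ℝ) :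
    ∃ n, C * ‖deriv (f^[n]) z‖ < κ * ‖f^[n] z - a‖ := by
  have hpos : 0 < κ ^ 2 * ‖z - a‖ ^ 3 := by
    have hz0 : 0 < ‖z - a‖ := hS.norm_iterate_sub_pos hz 0
    positivity
  have hlim : Tendsto (fun n => C ^ 2 * ‖f^[n] z - a‖) atTop (𝓝 0) := by
    simpa using (tendsto_iff_norm_sub_tendsto_zero.1
      (hS.tendsto z (hS.core_subset hz))).const_mul (C ^ 2)
  obtain ⟨n, hn⟩ := (hlim.eventually_lt_const hpos).exists
  refine ⟨n, lt_of_pow_lt_pow_left₀ 2 (by positivity) ?_⟩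
  have hx := hS.norm_iterate_sub_pos hz n
  refine lt_of_mul_lt_mul_right (a := ‖z - a‖ ^ 3) ?_ (by positivity)
  calc (C * ‖deriv (f^[n]) z‖) ^ 2 * ‖z - a‖ ^ 3
      = C ^ 2 * (‖deriv (f^[n]) z‖ ^ 2 * ‖z - a‖ ^ 3) := by ring
    _ ≤ C ^ 2 * ‖f^[n] z - a‖ ^ 3 := by
        gcongr; exact hS.norm_deriv_iterate_sq_mul_le hf hz n
    _ = C ^ 2 * ‖f^[n] z - a‖ * ‖f^[n] z - a‖ ^ 2 := by ring
    _ < κ ^ 2 * ‖z - a‖ ^ 3 * ‖f^[n] z - a‖ ^ 2 := by gcongr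
    _ = (κ * ‖f^[n] z - a‖) ^ 2 * ‖z - a‖ ^ 3 := by ring

end IsAttractingPetal

end Petals

lemma IsProperHolomorphic.exists_critPts_attractedTo_notMem_cycleSet {g : ℂ → ℂ} {U' U : Set ℂ}
    (H : IsProperHolomorphic g U' U) (hsc : IsSimplyConnected U') (hU : IsPreconnected U)
    (hne : U' ≠ U) {a : ℂ} {P : ℕ} (hP : P ≠ 0) (horb : ∀ n : ℕ, g^[n] a ∈ U')
    (hper : g^[P] a = a) (hmul : deriv (g^[P]) a = 1) :
    ∃ c ∈ critPts g U', attractedTo g U' a c ∧ ∀ n : ℕ, g^[n] c ∉ cycleSet g a := by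
  have hdom : ∀ n, a ∈ iterateDomain g U' n := fun n i _ => horb i
  have hopen := isOpen_iterateDomain H.isOpen_source H.differentiableOn.continuousOn P
  obtain ⟨k, m, hgerm⟩ := exists_isParabolicGerm (H.analyticAt_iterate (hdom P)) hper hmul
    (H.not_eventually_iterate_eq_self hU hne hP (hdom P))
  obtain ⟨κ, hκ, S, hSdom, T, hS⟩ :=
    hgerm.exists_isAttractingPetal (hopen.mem_nhds (hdom P))
  let A : Set ℂ := {z | attractedTo g U' a z ∧ ∀ n, g^[n] z ∉ cycleSet g a}
  have hSA : S ⊆ A := fun z hz => by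
    have hiter : ∀ n, (g^[P])^[n] z ∈ S := fun n => hS.mapsTo.iterate n hz
    have hlim := hS.tendsto z hz
    exact ⟨attractedTo_of_tendsto hP (fun j _ => (H.analyticAt_iterate (hdom j)).continuousAt)
        (fun n => hSdom (hiter n)) hlim,
      iterate_notMem_cycleSet_of_tendsto hper (fun n h => hS.notMem (h ▸ hiter n)) hP hlim⟩
  have hA : U' ∩ g ⁻¹' A ⊆ A := fun z hz =>
    ⟨attractedTo_of_image hz.1 hz.2.1, fun n hn => hz.2.2 n <| by
      rw [← iterate_succ_apply, iterate_succ_apply']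
      exact iterate_mem_cycleSet hn 1⟩
  have hdiff : ∀ z ∈ T, DifferentiableAt ℂ (g^[P]) z := fun z hz =>
    (H.analyticAt_iterate (hSdom (hS.core_subset hz))).differentiableAt
  obtain ⟨z₀, hz₀⟩ := hS.core_nonempty
  have hz₀U : ∀ n, g^[n] z₀ ∈ U' := (hSA (hS.core_subset hz₀)).1.1
  have hne_univ : U' ≠ univ := fun h => hne (H.subset.antisymm (h ▸ subset_univ U))
  obtain ⟨c, hc, hcA⟩ := H.inter_critPts_nonempty hsc hne_univ (fun z hz => hz.1.1 0) hA (hz₀U 0)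
    fun C => by
      obtain ⟨n, hn⟩ := hS.exists_mul_norm_deriv_iterate_lt hdiff hz₀ hκ C
      refine ⟨P * n, κ * ‖(g^[P])^[n] z₀ - a‖, fun i _ => hz₀U i,
        mul_pos hκ (hS.norm_iterate_sub_pos hz₀ n), ?_, ?_⟩
      · rw [iterate_mul]
        exact (hS.ball_subset _ (hS.mapsTo_core.iterate n hz₀)).trans hSA
      · rwa [iterate_mul]
  exact ⟨c, hc, hcA⟩

theorem basin_contains_critical_point_general {g : ℂ → ℂ} {U' U : Set ℂ}
    (H : IsProperHolomorphic g U' U) (hsc : IsSimplyConnected U') (hU : IsPreconnected U)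
    (hne : U' ≠ U) {a : ℂ} {p : ℕ} (hp : p ≠ 0) (horb : ∀ n : ℕ, g^[n] a ∈ U')
    (hper : g^[p] a = a) :
    (‖deriv (g^[p]) a‖ < 1 → ∃ c ∈ critPts g U', attractedTo g U' a c) ∧
    ((∃ q : ℕ, 1 ≤ q ∧ (deriv (g^[p]) a) ^ q = 1) →
      ∃ c ∈ critPts g U', attractedTo g U' a c ∧ ∀ n : ℕ, g^[n] c ∉ cycleSet g a) := by
  refine ⟨H.exists_critPts_attractedTo hsc
    (fun h => hne (H.subset.antisymm (h ▸ subset_univ U))) hp horb hper, ?_⟩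
  rintro ⟨q, hq, hroot⟩
  have hderiv : HasDerivAt (g^[p]) (deriv (g^[p]) a) a :=
    (H.analyticAt_iterate fun i _ => horb i).differentiableAt.hasDerivAt
  refine H.exists_critPts_attractedTo_notMem_cycleSet hsc hU hne (P := p * q)
    (mul_ne_zero hp (Nat.one_le_iff_ne_zero.1 hq)) horb ?_ ?_
  · rw [iterate_mul, iterate_fixed hper]
  · rw [iterate_mul, (hderiv.iterate a hper q).deriv, hroot]

lemma PLSetting.isProperHolomorphic {g : ℂ → ℂ} {U' U : Set ℂ} {d : ℕ} (H : PLSetting g U' U d) :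
    IsProperHolomorphic g U' U :=
  ⟨H.disk'.1, H.disk.1, H.subset, H.holo, H.mapsTo, H.proper⟩

/-- **Lemma.** The basin of every attracting or parabolic cycle of `g : U' → U` contains a
critical point of `g`. (For a parabolic cycle the basin excludes points eventually landing
on the cycle.) -/
theorem basin_contains_critical_point {g : ℂ → ℂ} {U' U : Set ℂ} {d : ℕ}
    (H : PLSetting g U' U d) {a : ℂ} {p : ℕ} (hp : 1 ≤ p)
    (horb : ∀ n : ℕ, g^[n] a ∈ U') (hper : g^[p] a = a) :
    (‖deriv (g^[p]) a‖ < 1 → ∃ c ∈ critPts g U', attractedTo g U' a c) ∧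
    ((∃ q : ℕ, 1 ≤ q ∧ (deriv (g^[p]) a) ^ q = 1) →
      ∃ c ∈ critPts g U', attractedTo g U' a c ∧ ∀ n : ℕ, g^[n] c ∉ cycleSet g a) :=
  basin_contains_critical_point_general H.isProperHolomorphic H.disk'.2.2 H.disk.2.1.isPreconnected
    H.ne (Nat.one_le_iff_ne_zero.1 hp) horb hper
end
end

section
/- Fix a Jordan curve Γ₀ in U which encloses P_g, let V₀ be the Jordan domain bounded by Γ₀ (so P_g ⊂ V₀ ⊂ closure(V₀) ⊂ U), and set V_{-n} = g^{-n}(V₀) and Γ_n = ∂V_{-n} for n > 0 (each V_{-n} is simply connected and each Γ_n is a Jordan curve). Assume that Γ_n ∩ Γ₀ ≠ ∅ for all n. Then for every ε > 0 and every sufficiently large n, the map gⁿ has a repelling fixed point in the ε-neighborhood of Γ₀. -/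
open Set Function Metric Topology Filter

noncomputable section

/-- `Γ ⊆ ℂ` is a Jordan curve: a homeomorphic image of the unit circle. -/
def IsJordanCurve (Γ : Set ℂ) : Prop :=
  ∃ f : Metric.sphere (0 : ℂ) 1 → ℂ, Continuous f ∧ Function.Injective f ∧ Set.range f = Γ

/-- `g^{-n}(V)`: points whose first `n` iterates are defined (stay in `U'`) and whose
`n`-th iterate lies in `V`. -/
def preIter (g : ℂ → ℂ) (U' V : Set ℂ) (n : ℕ) : Set ℂ :=
  {z | (∀ k < n, g^[k] z ∈ U') ∧ g^[n] z ∈ V}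

/-!
Since `U'` is simply connected and omits a point, the inverse branches of `g^[n]` over a disk in
`U \ P_g` form a normal family. If some sequence of branches had a nonconstant limit near `y`, then
composing one branch with a much later iterate would give iterates `g^[m]` arbitrarily close to the
identity near `y`. This recurrence spreads along all disks in `U \ P_g`; if it held at a point of
`Γ₀`, it would hold on all of `Γ₀`, which puts `V₀` and then all of `U` inside `U'`. Hence all
limits of branches along `Γ₀` are constant.

Now take a sequence of `n` along which the conclusion fails, choose `z_n ∈ Γ_n ∩ Γ₀`, and pass to
a limit `z_n → z`, `g^[n] z_n → y`. That branches tend to the constant `z` near `y` propagates along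
`Γ₀` from `y` to `z` itself, so a branch maps a disk around `z` into a much smaller concentric one.
Its attracting fixed point is a repelling fixed point of `g^[n]`, a contradiction.
-/

/-! ### Locally uniform limits of holomorphic functions -/

section LocallyUniformLimits

variable {ι X Y : Type*} {l : Filter ι}

lemma tendsto_prod_nhds_of_tendstoLocallyUniformlyOn [TopologicalSpace X] [UniformSpace Y]
    {f : ι → X → Y} {Φ : X → Y} {B : Set X} (hB : IsOpen B)
    (hf : TendstoLocallyUniformlyOn f Φ l B) (hΦ : ContinuousOn Φ B) {y : X} (hy : y ∈ B) :
    Tendsto (fun q : ι × X => f q.1 q.2) (l ×ˢ 𝓝 y) (𝓝 (Φ y)) :=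
  ((hΦ.continuousAt (hB.mem_nhds hy)).tendsto.comp tendsto_snd).congr_uniformity
    (hB.tendstoLocallyUniformlyOn_iff_forall_tendsto.1 hf y hy)

lemma continuousOn_of_tendsto_prod_nhds [NeBot l] [TopologicalSpace X] [TopologicalSpace Y]
    [RegularSpace Y] {f : ι → X → Y} {Φ : X → Y} {B : Set X} (hB : IsOpen B)
    (hf : ∀ y ∈ B, Tendsto (fun q : ι × X => f q.1 q.2) (l ×ˢ 𝓝 y) (𝓝 (Φ y))) :
    ContinuousOn Φ B := by
  refine fun y hy => ContinuousAt.continuousWithinAt ?_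
  refine (closed_nhds_basis (Φ y)).tendsto_right_iff.2 fun K hK => ?_
  have hev : ∀ᶠ u in 𝓝 y, ∀ᶠ i in l, f i u ∈ K :=
    (((hf y hy).comp tendsto_prod_swap).eventually hK.1).curry
  filter_upwards [hev, hB.mem_nhds hy] with u hu huB
  exact hK.2.mem_of_tendsto ((hf u huB).comp (tendsto_id.prodMk tendsto_const_nhds)) hu

lemma tendstoLocallyUniformlyOn_of_tendsto_prod_nhds [NeBot l] [TopologicalSpace X]
    [UniformSpace Y] {f : ι → X → Y} {Φ : X → Y} {B : Set X} (hB : IsOpen B)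
    (hf : ∀ y ∈ B, Tendsto (fun q : ι × X => f q.1 q.2) (l ×ˢ 𝓝 y) (𝓝 (Φ y))) :
    TendstoLocallyUniformlyOn f Φ l B :=
  hB.tendstoLocallyUniformlyOn_iff_forall_tendsto.2 fun y hy =>
    (Tendsto.prodMk_nhds (((continuousOn_of_tendsto_prod_nhds hB hf).continuousAt
      (hB.mem_nhds hy)).tendsto.comp tendsto_snd) (hf y hy)).mono_right (nhds_le_uniformity _)

lemma dist_le_of_mapsTo_closedBall {f : ℂ → ℂ} {y w u v : ℂ} {ρ M : ℝ}
    (hf : DifferentiableOn ℂ f (ball y (3 * ρ)))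
    (hM : MapsTo f (ball y (3 * ρ)) (closedBall w M)) (hu : u ∈ ball y ρ) (hv : v ∈ ball y ρ) :
    dist (f u) (f v) ≤ M / ρ * dist u v := by
  have hsub : ball v (2 * ρ) ⊆ ball y (3 * ρ) := ball_subset_ball' (by linarith [mem_ball.1 hv])
  have hvv : v ∈ ball v (2 * ρ) := mem_ball_self (by linarith [pos_of_mem_ball hv])
  have hmaps : MapsTo f (ball v (2 * ρ)) (closedBall (f v) (2 * M)) := fun x hx => by
    have hxw := hM (hsub hx)
    have hvw := hM (hsub hvv)
    rw [mem_closedBall] at *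
    linarith [dist_triangle_right (f x) (f v) w]
  have huv : u ∈ ball v (2 * ρ) := by
    rw [mem_ball] at *
    linarith [dist_triangle_right u v y]
  simpa only [mul_div_mul_left _ _ (two_ne_zero' ℝ)] using
    Complex.dist_le_div_mul_dist_of_mapsTo_ball (hf.mono hsub) hmaps huv

lemma exists_tendstoLocallyUniformlyOn_of_mapsTo_closedBall (𝒰 : Ultrafilter ι) {f : ι → ℂ → ℂ}
    {B : Set ℂ} {w : ℂ} {M : ℝ} (hB : IsOpen B)
    (hf : ∀ᶠ i in (𝒰 : Filter ι), DifferentiableOn ℂ (f i) B ∧ MapsTo (f i) B (closedBall w M)) :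
    ∃ Φ : ℂ → ℂ, DifferentiableOn ℂ Φ B ∧
      TendstoLocallyUniformlyOn f Φ (𝒰 : Filter ι) B := by
  have hpt : ∀ y, ∃ c, y ∈ B → Tendsto (fun i => f i y) (𝒰 : Filter ι) (𝓝 c) := fun y => by
    by_cases hy : y ∈ B
    · obtain ⟨c, -, hc⟩ := (isCompact_closedBall w M).ultrafilter_le_nhds
        (𝒰.map fun i => f i y) (le_principal_iff.2 (hf.mono fun i hi => hi.2 hy))
      exact ⟨c, fun _ => hc⟩
    · exact ⟨0, fun h => absurd h hy⟩
  choose Φ hΦ using hpt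
  have hlim : TendstoLocallyUniformlyOn f Φ (𝒰 : Filter ι) B := by
    refine tendstoLocallyUniformlyOn_of_tendsto_prod_nhds hB fun y hy => ?_
    obtain ⟨r, hr, hrB⟩ := Metric.isOpen_iff.1 hB y hy
    obtain ⟨ρ, rfl⟩ : ∃ ρ, r = 3 * ρ := ⟨r / 3, by ring⟩
    have hρ : 0 < ρ := by linarith
    have hlip : ∀ᶠ q : ι × ℂ in (𝒰 : Filter ι) ×ˢ 𝓝 y,
        dist (f q.1 q.2) (Φ y) ≤ M / ρ * dist q.2 y + dist (f q.1 y) (Φ y) := by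
      filter_upwards [hf.prod_mk (ball_mem_nhds y hρ)] with q hq
      have hq' := dist_le_of_mapsTo_closedBall (hq.1.1.mono hrB)
        (hq.1.2.mono_left hrB) hq.2 (mem_ball_self hρ)
      linarith [dist_triangle (f q.1 q.2) (f q.1 y) (Φ y)]
    have hzero : Tendsto (fun q : ι × ℂ => M / ρ * dist q.2 y + dist (f q.1 y) (Φ y))
        ((𝒰 : Filter ι) ×ˢ 𝓝 y) (𝓝 (M / ρ * 0 + 0)) :=
      ((tendsto_iff_dist_tendsto_zero.1 tendsto_id).comp tendsto_snd |>.const_mul _).add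
        ((tendsto_iff_dist_tendsto_zero.1 (hΦ y hy)).comp tendsto_fst)
    rw [mul_zero, add_zero] at hzero
    exact tendsto_iff_dist_tendsto_zero.2
      (squeeze_zero' (Eventually.of_forall fun _ => dist_nonneg) hlip hzero)
  exact ⟨Φ, hlim.differentiableOn (hf.mono fun i hi => hi.1) hB, hlim⟩

lemma frequently_ne_of_mem_closedBall {f : ℂ → ℂ} {y u : ℂ} {r R : ℝ}
    (hf : DifferentiableOn ℂ f (ball y R)) (hr : r < R) (hu : u ∈ closedBall y r)
    (hne : f u ≠ f y) : ∃ᶠ z in 𝓝 y, f z ≠ f y := by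
  have huR : u ∈ ball y R := closedBall_subset_ball hr hu
  refine fun hconst => hne ?_
  exact (hf.analyticOnNhd isOpen_ball).eqOn_of_preconnected_of_eventuallyEq analyticOnNhd_const
    (convex_ball y R).isPreconnected (mem_ball_self (pos_of_mem_ball huR))
    (hconst.mono fun _ => not_not.1) huR

lemma exists_closedBall_forall_sphere_le {Φ : ℂ → ℂ} {y : ℂ} {K : Set ℂ} (hK : K ∈ 𝓝 y)
    (hΦ : DifferentiableOn ℂ Φ K) (hne : ¬∀ᶠ u in 𝓝 y, Φ u = Φ y) :
    ∃ r > 0, ∃ R > r, ball y R ⊆ K ∧ ∃ m > 0, ∀ u ∈ sphere y r, m ≤ ‖Φ u - Φ y‖ := by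
  have hpunct : ∀ᶠ u in 𝓝 y, u ≠ y → Φ u ≠ Φ y := eventually_nhdsWithin_iff.1
    (((hΦ.analyticAt hK).eventually_eq_or_eventually_ne analyticAt_const).resolve_left hne)
  obtain ⟨R, hR, hRK⟩ := Metric.mem_nhds_iff.1 (inter_mem hK hpunct)
  have hsub : sphere y (R / 2) ⊆ ball y R :=
    sphere_subset_closedBall.trans (closedBall_subset_ball (by linarith))
  have hcont : ContinuousOn (fun u => ‖Φ u - Φ y‖) (sphere y (R / 2)) :=
    ((hΦ.continuousOn.mono fun u hu => (hRK (hsub hu)).1).sub continuousOn_const).norm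
  obtain ⟨m, hm, hmin⟩ := (isCompact_sphere y (R / 2)).exists_forall_le' hcont (a := 0)
    fun u hu => norm_pos_iff.2 (sub_ne_zero.2 ((hRK (hsub hu)).2
      (ne_of_mem_sphere hu (by positivity))))
  exact ⟨R / 2, by positivity, R, half_lt_self hR, fun u hu => (hRK hu).1, m, hm, hmin⟩

-- A quantitative form of Hurwitz's theorem.
lemma eventually_ball_subset_image_of_tendstoLocallyUniformlyOn [NeBot l] {f : ι → ℂ → ℂ}
    {Φ : ℂ → ℂ} {B : Set ℂ} (hB : IsOpen B) (hf : ∀ᶠ i in l, DifferentiableOn ℂ (f i) B)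
    (hlim : TendstoLocallyUniformlyOn f Φ l B) {y : ℂ} (hy : y ∈ B)
    (hne : ¬∀ᶠ u in 𝓝 y, Φ u = Φ y) {K : Set ℂ} (hK : K ∈ 𝓝 y) :
    ∃ ε > 0, ∀ᶠ i in l, ball (Φ y) ε ⊆ f i '' K := by
  obtain ⟨r, hr, R, hrR, hRB, m, hm, hmin⟩ := exists_closedBall_forall_sphere_le
    (inter_mem hK (hB.mem_nhds hy)) ((hlim.differentiableOn hf hB).mono inter_subset_right) hne
  have hsub : closedBall y r ⊆ K ∩ B := (closedBall_subset_ball hrR).trans hRB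
  have hunif := Metric.tendstoUniformlyOn_iff.1
    ((tendstoLocallyUniformlyOn_iff_forall_isCompact hB).1 hlim _ (hsub.trans inter_subset_right)
      (isCompact_closedBall y r)) (m / 8) (by positivity)
  refine ⟨m / 8, by positivity, ?_⟩
  filter_upwards [hf, hunif] with i hfi hi
  have hfR : DifferentiableOn ℂ (f i) (ball y R) := hfi.mono (hRB.trans inter_subset_right)
  have hcenter := hi y (mem_closedBall_self hr.le)
  have hsphere : ∀ u ∈ sphere y r, m / 2 ≤ ‖f i u - f i y‖ := fun u hu => by
    have hmu := hmin u hu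
    have hiu := hi u (sphere_subset_closedBall hu)
    rw [← dist_eq_norm] at hmu ⊢
    linarith [dist_triangle4 (Φ u) (f i u) (f i y) (Φ y), dist_comm (f i y) (Φ y)]
  obtain ⟨u, hu⟩ := (NormedSpace.sphere_nonempty (x := y)).2 hr.le
  have hfreq := frequently_ne_of_mem_closedBall hfR hrR (sphere_subset_closedBall hu)
    (sub_ne_zero.1 (norm_pos_iff.1 ((half_pos hm).trans_le (hsphere u hu))))
  calc ball (Φ y) (m / 8) ⊆ ball (f i y) (m / 2 / 2) :=
        ball_subset_ball' (by linarith)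
    _ ⊆ f i '' closedBall y r := (hfR.mono (by
        rw [closure_ball y hr.ne']; exact closedBall_subset_ball hrR)).diffContOnCl
          |>.ball_subset_image_closedBall hr hsphere hfreq
    _ ⊆ f i '' K := image_mono (hsub.trans inter_subset_left)

lemma ne_zero_of_tendstoLocallyUniformlyOn [NeBot l] {f : ι → ℂ → ℂ} {Φ : ℂ → ℂ} {B : Set ℂ}
    (hB : IsOpen B) (hBc : IsPreconnected B)
    (hf : ∀ᶠ i in l, DifferentiableOn ℂ (f i) B ∧ ∀ u ∈ B, f i u ≠ 0)
    (hlim : TendstoLocallyUniformlyOn f Φ l B) {y : ℂ} (hy : y ∈ B) (hΦy : Φ y ≠ 0) :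
    ∀ u ∈ B, Φ u ≠ 0 := fun u hu h0 => by
  have hfd : ∀ᶠ i in l, DifferentiableOn ℂ (f i) B := hf.mono fun i hi => hi.1
  by_cases hconst : ∀ᶠ v in 𝓝 u, Φ v = Φ u
  · have hΦ := (hlim.differentiableOn hfd hB).analyticOnNhd hB
    exact hΦy ((hΦ.eqOn_of_preconnected_of_eventuallyEq analyticOnNhd_const hBc hu hconst hy).trans
      h0)
  · obtain ⟨ε, hε, hev⟩ := eventually_ball_subset_image_of_tendstoLocallyUniformlyOn hB hfd hlim
      hu hconst (hB.mem_nhds hu)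
    obtain ⟨i, hi, hfi⟩ := (hev.and hf).exists
    obtain ⟨v, hv, hv0⟩ := hi (mem_ball_self hε)
    exact hfi.2 v hv (hv0.trans h0)

end LocallyUniformLimits

/-! ### Normal families with values in a simply connected domain -/

section NormalFamilies

lemma hasDerivAt_of_sq_eq_sub {σ : ℂ → ℂ} {p z : ℂ} (hσ : ContinuousAt σ z)
    (hsq : ∀ w, σ w ^ 2 = w - p) (hz : σ z ≠ 0) : HasDerivAt σ (2 * σ z)⁻¹ z := by
  have hsquare : HasDerivAt (fun w : ℂ => w ^ 2 + p) (2 * σ z) (σ z) := by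
    simpa using ((hasDerivAt_id (σ z)).pow 2).add_const p
  exact hsquare.of_local_left_inverse hσ (mul_ne_zero two_ne_zero hz)
    (Eventually.of_forall fun w => by rw [hsq, sub_add_cancel])

lemma image_mem_nhds_of_deriv_ne_zero {f : ℂ → ℂ} {W : Set ℂ} {z : ℂ} (hW : W ∈ 𝓝 z)
    (hf : DifferentiableOn ℂ f W) (hd : deriv f z ≠ 0) : f '' W ∈ 𝓝 (f z) :=
  (hf.analyticAt hW).hasStrictDerivAt.map_nhds_eq hd ▸ image_mem_map hW

-- The classical trick of Koebe: a square root `σ` of `z - p` omits a neighbourhood of `-a`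
-- for each of its values `a`, and `φ = 1 / (σ + a)`.
lemma exists_bounded_coordinate {W : Set ℂ} (hW : IsOpen W) (hsc : IsSimplyConnected W)
    (hne : W ≠ univ) :
    ∃ (φ : ℂ → ℂ) (p a : ℂ) (M : ℝ), DifferentiableOn ℂ φ W ∧
      MapsTo φ W (closedBall 0 M) ∧ ∀ z ∈ W, (z - p) * φ z ^ 2 = (1 - a * φ z) ^ 2 := by
  obtain ⟨p, hp⟩ := (ne_univ_iff_exists_notMem _).1 hne
  obtain ⟨σ, hσc, hsq⟩ := Complex.exists_continuousOn_pow_eq hsc hW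
    (g := fun z => z - p) (by fun_prop)
    (fun ⟨z, hz, hzp⟩ => hp (sub_eq_zero.1 hzp ▸ hz)) two_ne_zero
  have hσ0 : ∀ z ∈ W, σ z ≠ 0 := fun z hz h0 => by
    have hzp := hsq z
    rw [h0, zero_pow two_ne_zero, eq_comm, sub_eq_zero] at hzp
    exact hp (hzp ▸ hz)
  have hderiv : ∀ z ∈ W, HasDerivAt σ (2 * σ z)⁻¹ z := fun z hz =>
    hasDerivAt_of_sq_eq_sub (hσc.continuousAt (hW.mem_nhds hz)) hsq (hσ0 z hz)
  have hσ : DifferentiableOn ℂ σ W := fun z hz =>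
    (hderiv z hz).differentiableAt.differentiableWithinAt
  obtain ⟨z₀, hz₀⟩ : W.Nonempty := hsc.nonempty
  obtain ⟨ε, hε, hball⟩ : ∃ ε > 0, ball (σ z₀) ε ⊆ σ '' W := by
    refine Metric.mem_nhds_iff.1 (image_mem_nhds_of_deriv_ne_zero (hW.mem_nhds hz₀) hσ ?_)
    rw [(hderiv z₀ hz₀).deriv]
    exact inv_ne_zero (mul_ne_zero two_ne_zero (hσ0 z₀ hz₀))
  have hfar : ∀ z ∈ W, ε ≤ ‖σ z + σ z₀‖ := fun z hz => by
    by_contra! hlt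
    obtain ⟨w, -, hwz⟩ : -σ z ∈ σ '' W := hball <| by
      rwa [mem_ball, dist_eq_norm, ← norm_neg, neg_sub, sub_neg_eq_add, add_comm]
    have hwz' : w = z := by
      rw [← sub_left_inj (a := p), ← hsq, ← hsq, hwz, neg_sq]
    rw [hwz', eq_neg_iff_add_eq_zero, ← two_mul] at hwz
    exact hσ0 z hz ((mul_eq_zero_iff_left two_ne_zero).1 hwz)
  have hne0 : ∀ z ∈ W, σ z + σ z₀ ≠ 0 := fun z hz =>
    norm_pos_iff.1 (hε.trans_le (hfar z hz))
  refine ⟨fun z => (σ z + σ z₀)⁻¹, p, σ z₀, ε⁻¹, (hσ.add_const _).inv hne0, fun z hz => ?_,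
    fun z hz => ?_⟩
  · rw [mem_closedBall_zero_iff, norm_inv]
    exact inv_anti₀ hε (hfar z hz)
  · rw [← hsq z]
    field_simp [hne0 z hz]
    ring

lemma exists_tendstoLocallyUniformlyOn_of_tendsto {ι : Type*} (𝒰 : Ultrafilter ι) {W B : Set ℂ}
    (hW : IsOpen W) (hsc : IsSimplyConnected W) (hne : W ≠ univ) (hB : IsOpen B)
    (hBc : IsPreconnected B) {f : ι → ℂ → ℂ}
    (hf : ∀ᶠ i in (𝒰 : Filter ι), DifferentiableOn ℂ (f i) B ∧ MapsTo (f i) B W)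
    {y' : ι → ℂ} {y z : ℂ} (hy : y ∈ B) (hy' : Tendsto y' 𝒰 (𝓝 y))
    (hz : Tendsto (fun i => f i (y' i)) 𝒰 (𝓝 z)) :
    ∃ Φ : ℂ → ℂ, DifferentiableOn ℂ Φ B ∧ TendstoLocallyUniformlyOn f Φ (𝒰 : Filter ι) B ∧
      Φ y = z := by
  obtain ⟨φ, p, a, M, hφ, hφM, hrel⟩ := exists_bounded_coordinate hW hsc hne
  have hφ0 : ∀ w ∈ W, φ w ≠ 0 := fun w hw h0 => by simpa [h0] using hrel w hw
  have hinv : ∀ w ∈ W, w = p + ((φ w)⁻¹ - a) ^ 2 := fun w hw => by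
    have := hφ0 w hw
    field_simp
    linear_combination hrel w hw
  have hφf : ∀ᶠ i in (𝒰 : Filter ι), DifferentiableOn ℂ (φ ∘ f i) B ∧
      MapsTo (φ ∘ f i) B (closedBall 0 M) :=
    hf.mono fun i hi => ⟨hφ.comp hi.1 hi.2, hφM.comp hi.2⟩
  obtain ⟨Ψ, hΨ, hlim⟩ := exists_tendstoLocallyUniformlyOn_of_mapsTo_closedBall 𝒰 hB hφf
  have hjoint := fun {u} => tendsto_prod_nhds_of_tendstoLocallyUniformlyOn (y := u) hB hlim
    hΨ.continuousOn
  have hy'B : ∀ᶠ i in (𝒰 : Filter ι), y' i ∈ B := hy'.eventually (hB.mem_nhds hy)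
  have hΨy : Ψ y ≠ 0 := fun h0 => by
    have hy'lim := (hjoint hy).comp (tendsto_id.prodMk hy')
    have hlhs := (hz.sub_const p).mul (hy'lim.pow 2)
    have hrhs := ((tendsto_const_nhds (x := (1 : ℂ))).sub (hy'lim.const_mul a)).pow 2
    refine one_ne_zero (α := ℂ) (tendsto_nhds_unique ?_ (by simpa [h0] using hlhs))
    refine Tendsto.congr' ?_ (by simpa [h0] using hrhs)
    filter_upwards [hf, hy'B] with i hi hiB using (hrel _ (hi.2 hiB)).symm
  have hΨ0 : ∀ u ∈ B, Ψ u ≠ 0 := by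
    refine ne_zero_of_tendstoLocallyUniformlyOn hB hBc ?_ hlim hy hΨy
    filter_upwards [hf, hφf] with i hi hφi using ⟨hφi.1, fun u hu => hφ0 _ (hi.2 hu)⟩
  have hflim : TendstoLocallyUniformlyOn f (fun u => p + ((Ψ u)⁻¹ - a) ^ 2) (𝒰 : Filter ι) B := by
    refine tendstoLocallyUniformlyOn_of_tendsto_prod_nhds hB fun u hu => ?_
    refine ((((hjoint hu).inv₀ (hΨ0 u hu)).sub_const a).pow 2 |>.const_add p).congr' ?_
    filter_upwards [hf.prod_mk (hB.mem_nhds hu)] with q hq using (hinv _ (hq.1.2 hq.2)).symm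
  have hΦ := hflim.differentiableOn (hf.mono fun i hi => hi.1) hB
  exact ⟨_, hΦ, hflim, tendsto_nhds_unique
    (hflim.tendsto_comp (hΦ.continuousOn y hy) hy (tendsto_nhdsWithin_iff.2 ⟨hy', hy'B⟩)) hz⟩

end NormalFamilies

section Contraction

lemma exists_isFixedPt_norm_deriv_lt_one {h : ℂ → ℂ} {z : ℂ} {ρ : ℝ} (hρ : 0 < ρ)
    (hd : DifferentiableOn ℂ h (ball z (3 * ρ)))
    (hm : MapsTo h (ball z (3 * ρ)) (closedBall z (ρ / 2))) :
    ∃ a ∈ ball z ρ, IsFixedPt h a ∧ ‖deriv h a‖ < 1 := by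
  have hlip : LipschitzOnWith (1 / 2) h (ball z ρ) := LipschitzOnWith.of_dist_le_mul
    fun u hu v hv => (dist_le_of_mapsTo_closedBall hd hm hu hv).trans_eq (by
      rw [div_div_cancel_left' hρ.ne']; norm_num)
  have hsub : closedBall z (ρ / 2) ⊆ ball z ρ := closedBall_subset_ball (half_lt_self hρ)
  have hself : MapsTo h (closedBall z (ρ / 2)) (closedBall z (ρ / 2)) :=
    hm.mono_left (hsub.trans (ball_subset_ball (by linarith)))
  have hcontr : ContractingWith (1 / 2) (hself.restrict h _ _) :=
    ⟨by norm_num, (hlip.mono hsub).mapsToRestrict hself⟩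
  obtain ⟨a, ha, hfix, -⟩ := hcontr.exists_fixedPoint' isClosed_closedBall.isComplete hself
    (mem_closedBall_self (by positivity)) (edist_ne_top z (h z))
  refine ⟨a, hsub ha, hfix, ?_⟩
  exact (norm_deriv_le_of_lipschitzOn (isOpen_ball.mem_nhds (hsub ha)) hlip).trans_lt
    (by norm_num)

end Contraction

/-! ### Plane topology -/

section PlaneTopology

lemma isSimplyConnected_of_convex {E : Type*} [NormedAddCommGroup E] [NormedSpace ℝ E]
    {s : Set E} (hs : Convex ℝ s) (hne : s.Nonempty) : IsSimplyConnected s :=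
  have : ContractibleSpace s := hs.contractibleSpace hne
  SimplyConnectedSpace.ofContractible s

lemma not_isBounded_ne_sub_of_forall_ne_zero {F : ℂ → ℂ} (hF : Continuous F)
    (h0 : ∀ z, F z ≠ 0) (q : ℂ) : ¬Bornology.IsBounded {z | F z ≠ z - q} := fun hbd => by
  have huniv : IsSimplyConnected (univ : Set ℂ) :=
    isSimplyConnected_of_convex convex_univ univ_nonempty
  obtain ⟨Λ, hΛc, hΛ⟩ := Complex.exists_continuousOn_eqOn_exp_comp huniv isOpen_univ
    hF.continuousOn (fun ⟨z, _, hz⟩ => h0 z hz)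
  rw [continuousOn_univ] at hΛc
  obtain ⟨R, hR, hVR⟩ := hbd.subset_ball_lt 0 q
  let lam : ℝ → ℂ := fun θ => Λ (q + R * Complex.exp (θ * Complex.I)) - θ * Complex.I
  have hlamc : Continuous lam := by fun_prop
  have hexp : ∀ θ, Complex.exp (lam θ) = R := fun θ => by
    have hout : F (q + R * Complex.exp (θ * Complex.I)) = R * Complex.exp (θ * Complex.I) := by
      by_contra hne
      have hin := hVR (show _ ≠ _ by rwa [add_sub_cancel_left])
      simp [mem_ball, dist_eq_norm, Complex.norm_exp_ofReal_mul_I, abs_of_pos hR] at hin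
    rw [Complex.exp_sub, ← comp_apply (f := Complex.exp), hΛ (mem_univ _), hout,
      mul_div_cancel_right₀ _ (Complex.exp_ne_zero _)]
  have hconst : lam = fun _ => lam 0 := Complex.isCoveringMap_exp.eq_of_comp_eq hlamc
    continuous_const (funext fun θ => Subtype.ext ((hexp θ).trans (hexp 0).symm)) 0 rfl
  have hperiod := congrFun hconst (2 * Real.pi)
  simp [lam] at hperiod

lemma exists_continuous_forall_ne_zero_eqOn_sub {W A : Set ℂ} (hW : IsOpen W)
    (hsc : IsSimplyConnected W) (hA : IsClosed A) (hAW : A ⊆ W) {q : ℂ} (hq : q ∉ W) :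
    ∃ E : ℂ → ℂ, Continuous E ∧ (∀ z, E z ≠ 0) ∧ EqOn E (fun z => z - q) A := by
  obtain ⟨L, hLc, hL⟩ := Complex.exists_continuousOn_eqOn_exp_comp hsc hW
    (g := fun z => z - q) (by fun_prop) (fun ⟨z, hz, hzq⟩ => hq (sub_eq_zero.1 hzq ▸ hz))
  obtain ⟨L', hL'⟩ := ContinuousMap.exists_restrict_eq (Y := ℂ) hA
    ⟨A.domRestrict L, (hLc.mono hAW).domRestrict⟩
  refine ⟨fun z => Complex.exp (L' z), by fun_prop, fun z => Complex.exp_ne_zero _, fun z hz => ?_⟩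
  have hL'z : L' z = L z := DFunLike.congr_fun hL' ⟨z, hz⟩
  simpa only [hL'z, comp_apply] using hL (hAW hz)

-- Otherwise `z - q` would have a logarithm on `frontier V` for some `q ∈ V \ W`; extended over `V`
-- by Tietze, its exponential contradicts the winding number of a large circle around `q`.
lemma subset_of_frontier_subset {W V : Set ℂ} (hW : IsOpen W) (hsc : IsSimplyConnected W)
    (hbd : Bornology.IsBounded V) (hfr : frontier V ⊆ W) : V ⊆ W := by
  classical
  intro q hqV
  by_contra hqW
  obtain ⟨E, hEc, hE0, hE⟩ :=
    exists_continuous_forall_ne_zero_eqOn_sub hW hsc isClosed_frontier hfr hqW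
  have hFc : Continuous (V.piecewise E fun z => z - q) :=
    hEc.piecewise hE (by fun_prop)
  refine not_isBounded_ne_sub_of_forall_ne_zero hFc (fun z => ?_) q (hbd.subset fun z hz => ?_)
  · by_cases hz : z ∈ V
    · simpa only [piecewise_eq_of_mem _ _ _ hz] using hE0 z
    · simpa only [piecewise_eq_of_notMem _ _ _ hz, sub_ne_zero] using
        (ne_of_mem_of_not_mem hqV hz).symm
  · by_contra hzV
    exact hz (piecewise_eq_of_notMem _ _ _ hzV)

end PlaneTopology

section Spreading

/-- `S` spreads in `O` if every ball in `O` that meets `S` lies in `S`. For `O` open in a normed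
space this says that `O ∩ S` is clopen in `O`, in the form in which analytic continuation
provides it. -/
def SpreadsIn {X : Type*} [PseudoMetricSpace X] (O S : Set X) : Prop :=
  ∀ x r, ball x r ⊆ O → (S ∩ ball x r).Nonempty → ball x r ⊆ S

variable {X : Type*} [PseudoMetricSpace X] {O S A : Set X}

lemma SpreadsIn.isOpen_inter (h : SpreadsIn O S) (hO : IsOpen O) : IsOpen (O ∩ S) := by
  refine Metric.isOpen_iff.2 fun x ⟨hxO, hxS⟩ => ?_
  obtain ⟨r, hr, hrO⟩ := Metric.isOpen_iff.1 hO x hxO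
  exact ⟨r, hr, subset_inter hrO (h x r hrO ⟨x, hxS, mem_ball_self hr⟩)⟩

lemma SpreadsIn.isOpen_diff (h : SpreadsIn O S) (hO : IsOpen O) : IsOpen (O \ S) := by
  refine Metric.isOpen_iff.2 fun x ⟨hxO, hxS⟩ => ?_
  obtain ⟨r, hr, hrO⟩ := Metric.isOpen_iff.1 hO x hxO
  exact ⟨r, hr, fun y hy => ⟨hrO hy, fun hyS =>
    hxS (h x r hrO ⟨y, hyS, hy⟩ (mem_ball_self hr))⟩⟩

lemma SpreadsIn.closure_inter_subset (h : SpreadsIn O S) (hO : IsOpen O) : closure S ∩ O ⊆ S := by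
  rintro x ⟨hx, hxO⟩
  by_contra hxS
  obtain ⟨y, hy, hyS⟩ := mem_closure_iff.1 hx _ (h.isOpen_diff hO) ⟨hxO, hxS⟩
  exact hy.2 hyS

lemma SpreadsIn.subset_of_isPreconnected (h : SpreadsIn O S) (hO : IsOpen O)
    (hA : IsPreconnected A) (hAO : A ⊆ O) (hAS : (A ∩ S).Nonempty) : A ⊆ S :=
  (hA.subset_left_of_subset_union (h.isOpen_inter hO) (h.isOpen_diff hO)
    (disjoint_sdiff_right.mono_left inter_subset_right)
    (by rwa [inter_union_sdiff]) (hAS.mono fun _ hx => ⟨hx.1, hAO hx.1, hx.2⟩)).trans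
    inter_subset_right

end Spreading

/-! ### Iterated preimages and inverse branches -/

section Iterates

variable {g : ℂ → ℂ} {U' A A' : Set ℂ} {m n : ℕ} {z : ℂ}

lemma preIter_mono (h : A ⊆ A') : preIter g U' A n ⊆ preIter g U' A' n :=
  fun _ hz => ⟨hz.1, h hz.2⟩

lemma preIter_zero : preIter g U' A 0 = A := by
  ext z
  simp [preIter]

lemma mem_preIter_add : z ∈ preIter g U' A (m + n) ↔
    z ∈ preIter g U' (preIter g U' A m) n := by
  simp only [preIter, mem_ofPred_eq, iterate_add_apply]
  refine ⟨fun ⟨hU, hA⟩ => ⟨fun k hk => hU k (by omega), fun k hk => ?_, hA⟩,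
    fun ⟨hn, hm, hA⟩ => ⟨fun k hk => ?_, hA⟩⟩
  · rw [← iterate_add_apply]
    exact hU _ (by omega)
  · rcases lt_or_ge k n with hkn | hkn
    · exact hn k hkn
    · rw [← Nat.sub_add_cancel hkn, iterate_add_apply]
      exact hm _ (by omega)

lemma preIter_succ : preIter g U' A (n + 1) = U' ∩ g ⁻¹' preIter g U' A n := by
  ext z
  rw [mem_preIter_add]
  simp [preIter, and_assoc, and_left_comm]

lemma preIter_subset_dom (hn : n ≠ 0) : preIter g U' A n ⊆ U' :=
  fun _ hz => hz.1 0 (Nat.pos_of_ne_zero hn)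

end Iterates

/-- A proper holomorphic map `g : U' → U` between planar domains, `U'` being simply connected and a
proper subset of `U`, together with a closed set `P` containing the critical values and forward
invariant as far as the iterates are defined. In the application `P` is the postcritical
set. -/
structure ProperSystem (g : ℂ → ℂ) (U' U P : Set ℂ) : Prop where
  isOpen_dom : IsOpen U'
  isSimplyConnected_dom : IsSimplyConnected U'
  isOpen_codom : IsOpen U
  isPreconnected_codom : IsPreconnected U
  dom_ssubset : U' ⊂ U
  differentiableOn : DifferentiableOn ℂ g U'
  mapsTo : MapsTo g U' U
  properOn : ProperOn g U' U
  isClosed : IsClosed P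
  mapsTo_invariant : MapsTo g (U' ∩ P) P
  mapsTo_critPts : MapsTo g (critPts g U') P

/-- An inverse branch of `g^[n]` over `B`: a continuous choice of points of `g^{-n}(y)`, `y ∈ B`. -/
def IsInvBranch (g : ℂ → ℂ) (U' : Set ℂ) (n : ℕ) (B : Set ℂ) (h : ℂ → ℂ) : Prop :=
  ContinuousOn h B ∧ ∀ y ∈ B, h y ∈ preIter g U' {y} n

lemma IsInvBranch.mono {g : ℂ → ℂ} {U' B B' : Set ℂ} {n : ℕ} {h : ℂ → ℂ}
    (hh : IsInvBranch g U' n B h) (hB : B' ⊆ B) : IsInvBranch g U' n B' h :=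
  ⟨hh.1.mono hB, fun y hy => hh.2 y (hB hy)⟩

lemma IsInvBranch.mapsTo {g : ℂ → ℂ} {U' B : Set ℂ} {n : ℕ} {h : ℂ → ℂ}
    (hh : IsInvBranch g U' n B h) (hn : n ≠ 0) : MapsTo h B U' :=
  fun y hy => preIter_subset_dom hn (hh.2 y hy)

namespace ProperSystem

variable {g : ℂ → ℂ} {U' U P A B V : Set ℂ} {n : ℕ} {z : ℂ} {h : ℂ → ℂ}

lemma of_plSetting {d : ℕ} (H : PLSetting g U' U d) : ProperSystem g U' U (postCrit g U') where
  isOpen_dom := H.disk'.1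
  isSimplyConnected_dom := H.disk'.2.2
  isOpen_codom := H.disk.1
  isPreconnected_codom := H.disk.2.1.isPreconnected
  dom_ssubset := H.subset.ssubset_of_ne H.ne
  differentiableOn := H.holo
  mapsTo := H.mapsTo
  properOn := H.proper
  isClosed := isClosed_closure
  mapsTo_invariant := fun z ⟨hzU, hz⟩ => by
    have hmaps : MapsTo g (⋃ n : ℕ, g^[n] '' critPts g U') (⋃ n : ℕ, g^[n] '' critPts g U') := by
      intro w hw
      obtain ⟨n, c, hc, rfl⟩ := mem_iUnion.1 hw
      exact mem_iUnion.2 ⟨n + 1, c, hc, iterate_succ_apply' g n c⟩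
    have hcont : ContinuousAt g z := H.holo.continuousOn.continuousAt (H.disk'.1.mem_nhds hzU)
    exact closure_mono hmaps.image_subset (hcont.continuousWithinAt.mem_closure_image hz)
  mapsTo_critPts := fun c hc => subset_closure (mem_iUnion.2 ⟨1, c, hc, rfl⟩)

variable (H : ProperSystem g U' U P)
include H

lemma dom_ne_univ : U' ≠ univ := fun h => H.dom_ssubset.not_subset (h ▸ subset_univ U)

lemma isOpen_codom_diff : IsOpen (U \ P) := H.isOpen_codom.sdiff H.isClosed

lemma differentiableAt (hz : z ∈ U') : DifferentiableAt ℂ g z :=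
  H.differentiableOn.differentiableAt (H.isOpen_dom.mem_nhds hz)

lemma preIter_subset_codom (hA : A ⊆ U) : preIter g U' A n ⊆ U := by
  rcases eq_or_ne n 0 with rfl | hn
  · rwa [preIter_zero]
  · exact (preIter_subset_dom hn).trans H.dom_ssubset.subset

lemma isOpen_preIter (hA : IsOpen A) : IsOpen (preIter g U' A n) := by
  induction n with
  | zero => rwa [preIter_zero]
  | succ n ih =>
    rw [preIter_succ]
    exact H.differentiableOn.continuousOn.isOpen_inter_preimage H.isOpen_dom ih

lemma isCompact_preIter (hA : IsCompact A) (hAU : A ⊆ U) : IsCompact (preIter g U' A n) := by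
  induction n with
  | zero => rwa [preIter_zero]
  | succ n ih =>
    rw [preIter_succ]
    exact H.properOn _ (H.preIter_subset_codom hAU) ih

lemma frontier_preIter_subset (hV : IsOpen V) (hbd : Bornology.IsBounded V)
    (hVU : closure V ⊆ U) : frontier (preIter g U' V n) ⊆ preIter g U' (frontier V) n := by
  intro z hz
  rw [(H.isOpen_preIter hV).frontier_eq] at hz
  have hcl : z ∈ preIter g U' (closure V) n := closure_minimal (preIter_mono subset_closure)
    (H.isCompact_preIter hbd.isCompact_closure hVU).isClosed hz.1
  rw [hV.frontier_eq]
  exact ⟨hcl.1, hcl.2, fun h => hz.2 ⟨hcl.1, h⟩⟩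

lemma preIter_compl_subset : preIter g U' Pᶜ n ⊆ Pᶜ := by
  induction n with
  | zero => rw [preIter_zero]
  | succ n ih =>
    rw [preIter_succ]
    exact fun z ⟨hzU, hz⟩ hzP => ih hz (H.mapsTo_invariant ⟨hzU, hzP⟩)

lemma differentiableAt_iterate (hz : z ∈ preIter g U' A n) :
    DifferentiableAt ℂ (g^[n]) z := by
  induction n generalizing z with
  | zero => exact differentiableAt_id
  | succ n ih =>
    rw [preIter_succ] at hz
    rw [iterate_succ]
    exact (ih hz.2).comp z (H.differentiableAt hz.1)

lemma deriv_iterate_ne_zero (hz : z ∈ preIter g U' Pᶜ n) : deriv (g^[n]) z ≠ 0 := by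
  induction n generalizing z with
  | zero => simp
  | succ n ih =>
    rw [preIter_succ] at hz
    rw [iterate_succ, deriv_comp z (H.differentiableAt_iterate hz.2) (H.differentiableAt hz.1)]
    exact mul_ne_zero (ih hz.2) fun h0 =>
      H.preIter_compl_subset hz.2 (H.mapsTo_critPts ⟨hz.1, h0⟩)

lemma hasDerivAt_of_isInvBranch (hB : IsOpen B) (hBP : B ⊆ U \ P)
    (hh : IsInvBranch g U' n B h) {y : ℂ} (hy : y ∈ B) :
    HasDerivAt h (deriv (g^[n]) (h y))⁻¹ y := by
  refine HasDerivAt.of_local_left_inverse (hh.1.continuousAt (hB.mem_nhds hy))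
    (H.differentiableAt_iterate (hh.2 y hy)).hasDerivAt
    (H.deriv_iterate_ne_zero (preIter_mono (singleton_subset_iff.2 (hBP hy).2) (hh.2 y hy))) ?_
  filter_upwards [hB.mem_nhds hy] with w hw using (hh.2 w hw).2

lemma differentiableOn_of_isInvBranch (hB : IsOpen B) (hBP : B ⊆ U \ P)
    (hh : IsInvBranch g U' n B h) : DifferentiableOn ℂ h B := fun _ hy =>
  (H.hasDerivAt_of_isInvBranch hB hBP hh hy).differentiableAt.differentiableWithinAt

lemma isLocalHomeomorphOn : IsLocalHomeomorphOn g (U' ∩ g ⁻¹' Pᶜ) := by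
  rintro z ⟨hzU, hz⟩
  have hderiv : deriv g z ≠ 0 := fun h0 => hz (H.mapsTo_critPts ⟨hzU, h0⟩)
  have hstrict : HasStrictDerivAt g (deriv g z) z :=
    (H.differentiableOn.analyticAt (H.isOpen_dom.mem_nhds hzU)).hasStrictDerivAt
  exact ⟨(hstrict.hasStrictFDerivAt_equiv hderiv).toOpenPartialHomeomorph g,
    HasStrictFDerivAt.mem_toOpenPartialHomeomorph_source _, rfl⟩

lemma continuous_restrict : Continuous (H.mapsTo.restrict g U' U) :=
  H.differentiableOn.continuousOn.mapsToRestrict H.mapsTo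

lemma isProperMap_restrict : IsProperMap (H.mapsTo.restrict g U' U) := by
  refine isProperMap_iff_isCompact_preimage.2 ⟨H.continuous_restrict, fun K hK => ?_⟩
  rw [Subtype.isCompact_iff]
  convert H.properOn (Subtype.val '' K) (Subtype.coe_image_subset U K)
    (hK.image continuous_subtype_val) using 1
  ext z
  refine ⟨?_, fun ⟨hz, w, hw, hwz⟩ => ⟨⟨z, hz⟩, ?_, rfl⟩⟩
  · rintro ⟨w, hw, rfl⟩
    exact ⟨w.2, _, hw, rfl⟩
  · rwa [mem_preimage, show H.mapsTo.restrict g U' U ⟨z, hz⟩ = w from Subtype.ext hwz.symm]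

lemma isLocalHomeomorphOn_restrict : IsLocalHomeomorphOn (H.mapsTo.restrict g U' U)
    (H.mapsTo.restrict g U' U ⁻¹' {w | (w : ℂ) ∉ P}) :=
  IsLocalHomeomorphOn.of_comp_left (g := (Subtype.val : U → ℂ))
    (H.isLocalHomeomorphOn.comp
      H.isOpen_dom.isOpenEmbedding_subtypeVal.isLocalHomeomorph.isLocalHomeomorphOn
      fun z hz => ⟨z.2, hz⟩)
    H.isOpen_codom.isOpenEmbedding_subtypeVal.isLocalHomeomorph.isLocalHomeomorphOn
    fun _ _ => H.continuous_restrict.continuousAt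

lemma isCoveringMapOn_restrict :
    IsCoveringMapOn (H.mapsTo.restrict g U' U) {w | (w : ℂ) ∉ P} := by
  refine H.isProperMap_restrict.isClosedMap.isCoveringMapOn_of_isLocalHomeomorphOn
    (fun w hw => ?_) H.isLocalHomeomorphOn_restrict
  refine (H.isProperMap_restrict.isCompact_preimage isCompact_singleton).finite
    (IsDiscrete.of_openPartialHomeomorph _ subset_rfl fun z hz => ?_)
  obtain ⟨ψ, hzψ, hψ⟩ := H.isLocalHomeomorphOn_restrict z (by rwa [mem_preimage, hz])
  exact ⟨ψ, hzψ, hψ.symm⟩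

lemma exists_lift (hB : IsOpen B) (hBs : IsSimplyConnected B) {f : ℂ → ℂ}
    (hf : ContinuousOn f B) (hfP : MapsTo f B (U \ P)) {y z : ℂ} (hy : y ∈ B) (hz : z ∈ U')
    (hgz : g z = f y) :
    ∃ F : ℂ → ℂ, ContinuousOn F B ∧ F y = z ∧ ∀ u ∈ B, F u ∈ U' ∧ g (F u) = f u := by
  classical
  have : SimplyConnectedSpace B := hBs
  have : LocallyPathConnectedSpace B := hB.locallyPathConnectedSpace
  have hfU : MapsTo f B U := fun u hu => (hfP hu).1
  obtain ⟨F, ⟨hFy, hF⟩, -⟩ := H.isCoveringMapOn_restrict.existsUnique_continuousMap_lifts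
    (f := ⟨hfU.restrict f B U, hf.mapsToRestrict hfU⟩) (a₀ := ⟨y, hy⟩) (e₀ := ⟨z, hz⟩)
    (Subtype.ext hgz) (fun u => (hfP u.2).2)
  have hext : ∀ u : B, extend Subtype.val (fun u => (F u : ℂ)) 0 u = F u :=
    Subtype.val_injective.extend_apply _ _
  refine ⟨extend Subtype.val (fun u => (F u : ℂ)) 0, ?_, ?_, fun u hu => ?_⟩
  · rw [continuousOn_iff_continuous_domRestrict]
    exact (continuous_subtype_val.comp F.continuous).congr fun u => (hext u).symm
  · rw [hext ⟨y, hy⟩, hFy]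
  · rw [hext ⟨u, hu⟩]
    exact ⟨(F ⟨u, hu⟩).2, congrArg Subtype.val (congrFun hF ⟨u, hu⟩)⟩

lemma exists_isInvBranch (hB : IsOpen B) (hBs : IsSimplyConnected B) (hBP : B ⊆ U \ P) {y : ℂ}
    (hy : y ∈ B) (hz : z ∈ preIter g U' {y} n) : ∃ h, IsInvBranch g U' n B h ∧ h y = z := by
  induction n generalizing z with
  | zero =>
    rw [preIter_zero] at hz
    exact ⟨id, ⟨continuousOn_id, fun u _ => preIter_zero.superset rfl⟩, hz.symm⟩
  | succ n ih =>
    rw [preIter_succ] at hz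
    obtain ⟨h, hh, hhy⟩ := ih hz.2
    have hmaps : MapsTo h B (U \ P) := fun u hu =>
      ⟨H.preIter_subset_codom (singleton_subset_iff.2 (hBP hu).1) (hh.2 u hu),
        H.preIter_compl_subset (preIter_mono (singleton_subset_iff.2 (hBP hu).2) (hh.2 u hu))⟩
    obtain ⟨F, hFc, hFy, hF⟩ := H.exists_lift hB hBs hh.1 hmaps hy hz.1 hhy.symm
    refine ⟨F, ⟨hFc, fun u hu => ?_⟩, hFy⟩
    rw [preIter_succ]
    exact ⟨(hF u hu).1, by rw [mem_preimage, (hF u hu).2]; exact hh.2 u hu⟩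

end ProperSystem

/-! ### Recurrence and shrinking inverse branches -/

/-- The points near which suitable iterates `g^[m]`, `m ≠ 0`, are defined and uniformly close to
the identity. -/
def recurrentSet (g : ℂ → ℂ) (U' : Set ℂ) : Set ℂ :=
  {x | ∃ N ∈ 𝓝 x, ∀ ε > 0, ∃ m ≠ 0, ∀ u ∈ N, u ∈ preIter g U' (ball u ε) m}

/-- The points `y` with a choice of `z' n ∈ g^{-n}(y)` that tends to `z` along `l`. -/
def preIterLimit (g : ℂ → ℂ) (U' : Set ℂ) (l : Filter ℕ) (z : ℂ) : Set ℂ :=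
  {y | ∃ z' : ℕ → ℂ, Tendsto z' l (𝓝 z) ∧ ∀ᶠ n in l, z' n ∈ preIter g U' {y} n}

lemma recurrentSet_subset {g : ℂ → ℂ} {U' : Set ℂ} : recurrentSet g U' ⊆ U' := by
  rintro x ⟨N, hN, hrec⟩
  obtain ⟨m, hm, hmN⟩ := hrec 1 one_pos
  exact preIter_subset_dom hm (hmN x (mem_of_mem_nhds hN))

lemma isOpen_recurrentSet {g : ℂ → ℂ} {U' : Set ℂ} : IsOpen (recurrentSet g U') :=
  isOpen_iff_mem_nhds.2 fun _ ⟨N, hN, hrec⟩ =>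
    (eventually_mem_nhds_iff.2 hN).mono fun _ hN' => ⟨N, hN', hrec⟩

lemma not_eventually_id_eq (y : ℂ) : ¬∀ᶠ u in 𝓝 y, id u = id y := fun h => by
  obtain ⟨u, hu, hne⟩ := ((h.filter_mono nhdsWithin_le_nhds).and
    (self_mem_nhdsWithin (s := {y}ᶜ))).exists
  exact hne hu

namespace ProperSystem

variable {g : ℂ → ℂ} {U' U P B V : Set ℂ} {y z : ℂ}

section Branches

variable {ι : Type*} {l : Filter ι} {m : ι → ℕ} {h : ι → ℂ → ℂ} {Φ : ℂ → ℂ}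
variable (H : ProperSystem g U' U P)
include H

lemma exists_tendstoLocallyUniformlyOn_of_isInvBranch (𝒰 : Ultrafilter ι)
    (hm : ∀ᶠ i in (𝒰 : Filter ι), m i ≠ 0) (hB : IsOpen B) (hBc : IsPreconnected B)
    (hBP : B ⊆ U \ P) (hh : ∀ᶠ i in (𝒰 : Filter ι), IsInvBranch g U' (m i) B (h i)) {y' : ι → ℂ}
    (hy : y ∈ B) (hy' : Tendsto y' 𝒰 (𝓝 y)) (hz : Tendsto (fun i => h i (y' i)) 𝒰 (𝓝 z)) :
    ∃ Φ : ℂ → ℂ, DifferentiableOn ℂ Φ B ∧ TendstoLocallyUniformlyOn h Φ (𝒰 : Filter ι) B ∧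
      Φ y = z :=
  exists_tendstoLocallyUniformlyOn_of_tendsto 𝒰 H.isOpen_dom H.isSimplyConnected_dom
    H.dom_ne_univ hB hBc ((hm.and hh).mono fun _ hi =>
      ⟨H.differentiableOn_of_isInvBranch hB hBP hi.2, hi.2.mapsTo hi.1⟩) hy hy' hz

lemma subset_recurrentSet_of_tendstoLocallyUniformlyOn_id [NeBot l] (hm : ∀ᶠ i in l, m i ≠ 0)
    (hB : IsOpen B) (hBP : B ⊆ U \ P) (hh : ∀ᶠ i in l, IsInvBranch g U' (m i) B (h i))
    (hlim : TendstoLocallyUniformlyOn h id l B) : B ⊆ recurrentSet g U' := by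
  intro v hv
  obtain ⟨K, hK, hKB, hKc⟩ := local_compact_nhds (hB.mem_nhds hv)
  obtain ⟨δ, hδ, himage⟩ := eventually_ball_subset_image_of_tendstoLocallyUniformlyOn hB
    (hh.mono fun i => H.differentiableOn_of_isInvBranch hB hBP) hlim hv (not_eventually_id_eq v) hK
  refine ⟨ball v δ, ball_mem_nhds v hδ, fun ε hε => ?_⟩
  have hclose : ∀ᶠ i in l, ∀ w ∈ K, dist w (h i w) < ε := Metric.tendstoUniformlyOn_iff.1
    ((tendstoLocallyUniformlyOn_iff_forall_isCompact hB).1 hlim K hKB hKc) ε hε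
  obtain ⟨i, hmi, hhi, hi, hclosei⟩ := (hm.and (hh.and (himage.and hclose))).exists
  refine ⟨m i, hmi, fun u hu => ?_⟩
  obtain ⟨w, hw, rfl⟩ := hi hu
  exact preIter_mono (singleton_subset_iff.2 (hclosei w hw)) (hhi.2 w (hKB hw))

lemma exists_forall_dist_iterate_le [NeBot l] (hB : IsOpen B) (hBP : B ⊆ U \ P)
    (hh : ∀ᶠ i in l, IsInvBranch g U' (m i) B (h i)) (hlim : TendstoLocallyUniformlyOn h Φ l B)
    (hy : y ∈ B) (hne : ¬∀ᶠ u in 𝓝 y, Φ u = Φ y) :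
    ∃ C > 0, ∃ ρ > 0, ∀ᶠ i in l, ∀ u ∈ ball (Φ y) ρ, u ∈ preIter g U' univ (m i) ∧
      ∀ v ∈ ball (Φ y) ρ, dist (g^[m i] u) (g^[m i] v) ≤ C * dist u v := by
  obtain ⟨ε, hε, himage⟩ := eventually_ball_subset_image_of_tendstoLocallyUniformlyOn hB
    (hh.mono fun i => H.differentiableOn_of_isInvBranch hB hBP) hlim hy hne
    (inter_mem (hB.mem_nhds hy) (closedBall_mem_nhds y one_pos))
  obtain ⟨ρ, rfl⟩ : ∃ ρ, ε = 3 * ρ := ⟨ε / 3, by ring⟩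
  have hρ : 0 < ρ := by linarith
  refine ⟨1 / ρ, by positivity, ρ, hρ, ?_⟩
  filter_upwards [hh, himage] with i hi hball
  have hpre : ball (Φ y) (3 * ρ) ⊆ preIter g U' (closedBall y 1) (m i) := fun u hu => by
    obtain ⟨w, hw, rfl⟩ := hball hu
    exact preIter_mono (singleton_subset_iff.2 hw.2) (hi.2 w hw.1)
  refine fun u hu => ⟨preIter_mono (subset_univ _) (hpre (ball_subset_ball (by linarith) hu)),
    fun v hv => dist_le_of_mapsTo_closedBall (fun w hw => ?_) (fun w hw => (hpre hw).2) hu hv⟩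
  exact (H.differentiableAt_iterate (hpre hw)).differentiableWithinAt

-- For `m k < m i` large, `g^[m i - m k]` is close to the identity near `y`: it factors as the
-- branch `h k` followed by `g^[m i]`, where `h k` is close to the inverse `h i` of `g^[m i]`.
lemma mem_recurrentSet_of_not_eventually_const [NeBot l] (hm : Tendsto m l atTop) (hB : IsOpen B)
    (hBP : B ⊆ U \ P) (hh : ∀ᶠ i in l, IsInvBranch g U' (m i) B (h i))
    (hlim : TendstoLocallyUniformlyOn h Φ l B) (hy : y ∈ B) (hne : ¬∀ᶠ u in 𝓝 y, Φ u = Φ y) :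
    y ∈ recurrentSet g U' := by
  obtain ⟨C, hC, ρ, hρ, hlip⟩ := H.exists_forall_dist_iterate_le hB hBP hh hlim hy hne
  have hΦ : ContinuousAt Φ y := ((hlim.differentiableOn (hh.mono fun i =>
    H.differentiableOn_of_isInvBranch hB hBP) hB).differentiableAt (hB.mem_nhds hy)).continuousAt
  obtain ⟨K, hK, hKB, hKc⟩ := local_compact_nhds
    (inter_mem (hB.mem_nhds hy) (hΦ.preimage_mem_nhds (ball_mem_nhds (Φ y) (half_pos hρ))))
  refine ⟨K, hK, fun ε hε => ?_⟩
  have hclose : ∀ᶠ i in l, ∀ u ∈ K, dist (Φ u) (h i u) < min (ρ / 2) (ε / (2 * C)) :=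
    Metric.tendstoUniformlyOn_iff.1 ((tendstoLocallyUniformlyOn_iff_forall_isCompact hB).1 hlim K
      (hKB.trans inter_subset_left) hKc) _ (by positivity)
  have hmem : ∀ᶠ i in l, ∀ u ∈ K, h i u ∈ ball (Φ y) ρ := hclose.mono fun i hi u hu => by
    have hΦu := mem_ball.1 (hKB hu).2
    rw [mem_ball]
    linarith [dist_triangle_left (h i u) (Φ y) (Φ u), (lt_min_iff.1 (hi u hu)).1]
  have hgood := hh.and (hlip.and (hclose.and hmem))
  obtain ⟨k, hhk, -, hclosek, hmemk⟩ := hgood.exists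
  obtain ⟨i, hki, hhi, hlipi, hclosei, hmemi⟩ := ((hm.eventually_gt_atTop (m k)).and hgood).exists
  refine ⟨m i - m k, Nat.sub_ne_zero_of_lt hki, fun u hu => ?_⟩
  obtain ⟨hpre, hdist⟩ := hlipi (h k u) (hmemk u hu)
  have hnear : dist (h k u) (h i u) < ε / C := calc
    dist (h k u) (h i u) ≤ dist (Φ u) (h k u) + dist (Φ u) (h i u) := dist_triangle_left _ _ _
    _ < ε / (2 * C) + ε / (2 * C) :=
      add_lt_add (lt_min_iff.1 (hclosek u hu)).2 (lt_min_iff.1 (hclosei u hu)).2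
    _ = ε / C := by field_simp; norm_num
  have hreturn : h k u ∈ preIter g U' (ball u ε) (m i - m k + m k) := by
    rw [Nat.sub_add_cancel hki.le]
    refine ⟨hpre.1, ?_⟩
    have hmu : g^[m i] (h i u) = u := (hhi.2 u (hKB hu).1).2
    calc dist (g^[m i] (h k u)) u = dist (g^[m i] (h k u)) (g^[m i] (h i u)) := by rw [hmu]
      _ ≤ C * dist (h k u) (h i u) := hdist _ (hmemi u hu)
      _ < ε := (lt_div_iff₀' hC).1 hnear
  have hu' := (mem_preIter_add.1 hreturn).2
  rwa [(hhk.2 u (hKB hu).1).2] at hu'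

end Branches

variable (H : ProperSystem g U' U P)
include H

lemma spreadsIn_recurrentSet : SpreadsIn (U \ P) (recurrentSet g U') := by
  rintro x r hB ⟨y, ⟨N, hN, hrec⟩, hy⟩
  choose m hm0 hm using fun j : ℕ => hrec (1 / ((j : ℝ) + 1)) Nat.one_div_pos_of_nat
  have herr : Tendsto (fun j : ℕ => 1 / ((j : ℝ) + 1)) (hyperfilter ℕ) (𝓝 0) :=
    tendsto_one_div_add_atTop_nhds_zero_nat.mono_left Nat.hyperfilter_le_atTop
  have hgy : Tendsto (fun j => g^[m j] y) (hyperfilter ℕ) (𝓝 y) :=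
    tendsto_iff_dist_tendsto_zero.2 (squeeze_zero (fun _ => dist_nonneg)
      (fun j => (hm j y (mem_of_mem_nhds hN)).2.le) herr)
  have hbranch : ∀ᶠ j in (hyperfilter ℕ : Filter ℕ), ∃ h : ℂ → ℂ,
      IsInvBranch g U' (m j) (ball x r) h ∧ h (g^[m j] y) = y :=
    (hgy.eventually (isOpen_ball.mem_nhds hy)).mono fun j hj =>
      H.exists_isInvBranch isOpen_ball (isSimplyConnected_of_convex (convex_ball x r) ⟨y, hy⟩) hB
        hj ⟨(hm j y (mem_of_mem_nhds hN)).1, rfl⟩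
  obtain ⟨h, hh⟩ := hbranch.choice
  obtain ⟨Φ, hΦ, hlim, hΦy⟩ := H.exists_tendstoLocallyUniformlyOn_of_isInvBranch (hyperfilter ℕ)
    (Eventually.of_forall hm0) isOpen_ball (convex_ball x r).isPreconnected hB
    (hh.mono fun j hj => hj.1) hy hgy (tendsto_const_nhds.congr' (hh.mono fun j hj => hj.2.symm))
  have hnear : ∀ᶠ q in (hyperfilter ℕ : Filter ℕ) ×ˢ 𝓝 y,
      dist (h q.1 q.2) q.2 ≤ 1 / ((q.1 : ℝ) + 1) := by
    filter_upwards [(tendsto_prod_nhds_of_tendstoLocallyUniformlyOn isOpen_ball hlim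
      hΦ.continuousOn hy).eventually_mem (hΦy.symm ▸ hN), hh.prod_mk (isOpen_ball.mem_nhds hy)]
      with q hqN hq
    have hqm := (hm q.1 _ hqN).2
    rw [(hq.1.1.2 q.2 hq.2).2, mem_ball'] at hqm
    exact hqm.le
  have hΦid : Φ =ᶠ[𝓝 y] id := by
    filter_upwards [(tendsto_prod_swap.eventually hnear).curry, isOpen_ball.mem_nhds hy]
      with u hu huB
    exact tendsto_nhds_unique (hlim.tendsto_at huB) (tendsto_iff_dist_tendsto_zero.2
      (squeeze_zero' (Eventually.of_forall fun _ => dist_nonneg) hu herr))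
  exact H.subset_recurrentSet_of_tendstoLocallyUniformlyOn_id (Eventually.of_forall hm0)
    isOpen_ball hB (hh.mono fun j hj => hj.1) <| hlim.congr_right <|
      (hΦ.analyticOnNhd isOpen_ball).eqOn_of_preconnected_of_eventuallyEq
        (differentiableOn_id.analyticOnNhd isOpen_ball) (convex_ball x r).isPreconnected hy hΦid

lemma frontier_subset_diff_recurrentSet (hV : IsOpen V) (hbd : Bornology.IsBounded V)
    (hfr : IsPreconnected (frontier V)) (hPV : P ⊆ V) (hVU : closure V ⊆ U) :
    frontier V ⊆ (U \ P) \ recurrentSet g U' := by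
  have hfrUP : frontier V ⊆ U \ P := fun x hx =>
    ⟨hVU hx.1, fun hxP => disjoint_left.1 (disjoint_frontier_iff_isOpen.2 hV) hx (hPV hxP)⟩
  refine subset_sdiff.2 ⟨hfrUP, disjoint_left.2 fun x hx hxR => H.dom_ssubset.not_subset ?_⟩
  have hfrR : frontier V ⊆ recurrentSet g U' :=
    H.spreadsIn_recurrentSet.subset_of_isPreconnected H.isOpen_codom_diff hfr hfrUP ⟨x, hx, hxR⟩
  have hVU' : V ⊆ U' := subset_of_frontier_subset H.isOpen_dom H.isSimplyConnected_dom hbd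
    (hfrR.trans recurrentSet_subset)
  refine Subset.trans ?_ (union_subset hVU' (recurrentSet_subset (g := g)))
  refine H.isPreconnected_codom.subset_of_closure_inter_subset (hV.union isOpen_recurrentSet)
    ⟨x, (hfrUP hx).1, Or.inr hxR⟩ ?_
  rw [closure_union, closure_eq_self_union_frontier]
  rintro w ⟨(hw | hw) | hw, hwU⟩
  · exact Or.inl hw
  · exact Or.inr (hfrR hw)
  · by_cases hwV : w ∈ V
    · exact Or.inl hwV
    · exact Or.inr (H.spreadsIn_recurrentSet.closure_inter_subset H.isOpen_codom_diff
        ⟨hw, hwU, fun hwP => hwV (hPV hwP)⟩)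

section Limits

variable {𝒰 : Ultrafilter ℕ} {x : ℂ} {r : ℝ} {y' z' : ℕ → ℂ}

lemma exists_isInvBranch_tendstoLocallyUniformlyOn_const (h𝒰 : (𝒰 : Filter ℕ) ≤ atTop)
    (hB : ball x r ⊆ (U \ P) \ recurrentSet g U') (hy : y ∈ ball x r) (hy' : Tendsto y' 𝒰 (𝓝 y))
    (hz' : Tendsto z' 𝒰 (𝓝 z)) (hyz : ∀ᶠ n in (𝒰 : Filter ℕ), z' n ∈ preIter g U' {y' n} n) :
    ∃ h : ℕ → ℂ → ℂ, (∀ᶠ n in (𝒰 : Filter ℕ), IsInvBranch g U' n (ball x r) (h n)) ∧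
      TendstoLocallyUniformlyOn h (fun _ => z) (𝒰 : Filter ℕ) (ball x r) := by
  have hBP : ball x r ⊆ U \ P := hB.trans sdiff_subset
  have hbranch : ∀ᶠ n in (𝒰 : Filter ℕ), ∃ h : ℂ → ℂ,
      IsInvBranch g U' n (ball x r) h ∧ h (y' n) = z' n := by
    filter_upwards [hyz, hy'.eventually (isOpen_ball.mem_nhds hy)] with n hn hyn
    exact H.exists_isInvBranch isOpen_ball
      (isSimplyConnected_of_convex (convex_ball x r) ⟨y, hy⟩) hBP hyn hn
  obtain ⟨h, hh⟩ := hbranch.choice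
  have hinv : ∀ᶠ n in (𝒰 : Filter ℕ), IsInvBranch g U' n (ball x r) (h n) :=
    hh.mono fun n hn => hn.1
  obtain ⟨Φ, hΦ, hlim, rfl⟩ := H.exists_tendstoLocallyUniformlyOn_of_isInvBranch 𝒰
    (h𝒰 (eventually_ne_atTop 0)) isOpen_ball (convex_ball x r).isPreconnected hBP hinv hy hy'
    (hz'.congr' (hh.mono fun n hn => hn.2.symm))
  have hconst : ∀ᶠ u in 𝓝 y, Φ u = Φ y := by
    by_contra hne
    exact (hB hy).2
      (H.mem_recurrentSet_of_not_eventually_const h𝒰 isOpen_ball hBP hinv hlim hy hne)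
  exact ⟨h, hinv, hlim.congr_right <|
    (hΦ.analyticOnNhd isOpen_ball).eqOn_of_preconnected_of_eventuallyEq analyticOnNhd_const
      (convex_ball x r).isPreconnected hy hconst⟩

lemma ball_subset_preIterLimit (h𝒰 : (𝒰 : Filter ℕ) ≤ atTop)
    (hB : ball x r ⊆ (U \ P) \ recurrentSet g U') (hy : y ∈ ball x r) (hy' : Tendsto y' 𝒰 (𝓝 y))
    (hz' : Tendsto z' 𝒰 (𝓝 z)) (hyz : ∀ᶠ n in (𝒰 : Filter ℕ), z' n ∈ preIter g U' {y' n} n) :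
    ball x r ⊆ preIterLimit g U' 𝒰 z := fun u hu => by
  obtain ⟨h, hinv, hlim⟩ :=
    H.exists_isInvBranch_tendstoLocallyUniformlyOn_const h𝒰 hB hy hy' hz' hyz
  exact ⟨fun n => h n u, hlim.tendsto_at hu, hinv.mono fun n hn => hn.2 u hu⟩

lemma subset_preIterLimit_of_isPreconnected (h𝒰 : (𝒰 : Filter ℕ) ≤ atTop) {Γ : Set ℂ}
    (hΓ : IsPreconnected Γ) (hΓU : Γ ⊆ (U \ P) \ recurrentSet g U') (hy : y ∈ Γ)
    (hy' : Tendsto y' 𝒰 (𝓝 y)) (hz' : Tendsto z' 𝒰 (𝓝 z))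
    (hyz : ∀ᶠ n in (𝒰 : Filter ℕ), z' n ∈ preIter g U' {y' n} n) :
    Γ ⊆ preIterLimit g U' 𝒰 z := by
  have hopen : IsOpen ((U \ P) \ recurrentSet g U') :=
    H.spreadsIn_recurrentSet.isOpen_diff H.isOpen_codom_diff
  have hspread : SpreadsIn ((U \ P) \ recurrentSet g U') (preIterLimit g U' 𝒰 z) := by
    rintro x r hB ⟨v, ⟨w', hw', hvw⟩, hv⟩
    exact H.ball_subset_preIterLimit h𝒰 hB hv tendsto_const_nhds hw' hvw
  refine hspread.subset_of_isPreconnected hopen hΓ hΓU ⟨y, hy, ?_⟩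
  obtain ⟨r, hr, hB⟩ := Metric.isOpen_iff.1 hopen y (hΓU hy)
  have hyB := mem_ball_self (x := y) hr
  exact H.ball_subset_preIterLimit h𝒰 hB hyB hy' hz' hyz hyB

end Limits

lemma exists_repelling_of_isInvBranch {n : ℕ} {h : ℂ → ℂ} {ρ : ℝ} (hρ : 0 < ρ)
    (hB : ball z (3 * ρ) ⊆ U \ P) (hh : IsInvBranch g U' n (ball z (3 * ρ)) h)
    (hmaps : MapsTo h (ball z (3 * ρ)) (closedBall z (ρ / 2))) :
    ∃ a ∈ ball z ρ, a ∈ preIter g U' {a} n ∧ 1 < ‖deriv (g^[n]) a‖ := by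
  obtain ⟨a, ha, hfix, hderiv⟩ := exists_isFixedPt_norm_deriv_lt_one hρ
    (H.differentiableOn_of_isInvBranch isOpen_ball hB hh) hmaps
  have haB : a ∈ ball z (3 * ρ) := ball_subset_ball (by linarith) ha
  have hpre := hh.2 a haB
  rw [(H.hasDerivAt_of_isInvBranch isOpen_ball hB hh haB).deriv, hfix.eq, norm_inv] at hderiv
  rw [hfix.eq] at hpre
  have hne := H.deriv_iterate_ne_zero (preIter_mono (singleton_subset_iff.2 (hB haB).2) hpre)
  exact ⟨a, ha, hpre, (inv_lt_one₀ (norm_pos_iff.2 hne)).1 hderiv⟩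

lemma eventually_exists_repelling {𝒰 : Ultrafilter ℕ} (h𝒰 : (𝒰 : Filter ℕ) ≤ atTop)
    (hz : z ∈ (U \ P) \ recurrentSet g U') (hzz : z ∈ preIterLimit g U' 𝒰 z) {ε : ℝ}
    (hε : 0 < ε) : ∀ᶠ n in (𝒰 : Filter ℕ),
      ∃ a ∈ ball z ε, a ∈ preIter g U' {a} n ∧ 1 < ‖deriv (g^[n]) a‖ := by
  obtain ⟨r, hr, hB⟩ := Metric.isOpen_iff.1
    (H.spreadsIn_recurrentSet.isOpen_diff H.isOpen_codom_diff) z hz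
  obtain ⟨z', hz', hzz'⟩ := hzz
  obtain ⟨h, hinv, hlim⟩ := H.exists_isInvBranch_tendstoLocallyUniformlyOn_const h𝒰 hB
    (mem_ball_self hr) tendsto_const_nhds hz' hzz'
  obtain ⟨ρ, hρ, hρr, hρε⟩ : ∃ ρ > 0, closedBall z (3 * ρ) ⊆ ball z r ∧ ρ ≤ ε :=
    ⟨min (r / 4) ε, by positivity,
      closedBall_subset_ball (by linarith [min_le_left (r / 4) ε]), min_le_right _ _⟩
  have hclose := Metric.tendstoUniformlyOn_iff.1
    ((tendstoLocallyUniformlyOn_iff_forall_isCompact isOpen_ball).1 hlim _ hρr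
      (isCompact_closedBall z (3 * ρ))) (ρ / 2) (half_pos hρ)
  have hsub : ball z (3 * ρ) ⊆ ball z r := ball_subset_closedBall.trans hρr
  filter_upwards [hinv, hclose] with n hn hclosen
  obtain ⟨a, ha, hrep⟩ := H.exists_repelling_of_isInvBranch hρ
    (hsub.trans (hB.trans sdiff_subset)) (hn.mono hsub)
    fun u hu => mem_closedBall'.2 (hclosen u (ball_subset_closedBall hu)).le
  exact ⟨a, ball_subset_ball hρε ha, hrep⟩

end ProperSystem

lemma isPreconnected_of_isJordanCurve {Γ : Set ℂ} (hΓ : IsJordanCurve Γ) : IsPreconnected Γ := by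
  obtain ⟨f, hf, -, rfl⟩ := hΓ
  have : PreconnectedSpace (sphere (0 : ℂ) 1) := isPreconnected_iff_preconnectedSpace.1
    (isPreconnected_sphere (by rw [Complex.rank_real_complex]; norm_num) 0 1)
  exact isPreconnected_range hf

theorem repelling_near_curve_general {g : ℂ → ℂ} {U' U P V : Set ℂ} (H : ProperSystem g U' U P)
    (hV : IsOpen V) (hbd : Bornology.IsBounded V) (hfr : IsPreconnected (frontier V))
    (hPV : P ⊆ V) (hVU : closure V ⊆ U) {ε : ℝ} (hε : 0 < ε) :
    ∀ᶠ n in atTop, (frontier (preIter g U' V n) ∩ frontier V).Nonempty → ∃ a : ℂ,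
      (∀ k < n, g^[k] a ∈ U') ∧ g^[n] a = a ∧ 1 < ‖deriv (g^[n]) a‖ ∧
      ∃ b ∈ frontier V, dist a b < ε := by
  refine mem_iff_ultrafilter.2 fun 𝒰 h𝒰 => ?_
  by_contra hbad
  replace hbad := (Ultrafilter.eventually_not.2 hbad).mono fun n hn => Classical.not_imp.1 hn
  have hfrR := H.frontier_subset_diff_recurrentSet hV hbd hfr hPV hVU
  have hcpt : IsCompact (frontier V) := hbd.isCompact_closure.of_isClosed_subset isClosed_frontier
    frontier_subset_closure
  obtain ⟨z', hz'⟩ := (hbad.mono fun n hn => hn.1).choice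
  have hgz' := hz'.mono fun n hn => H.frontier_preIter_subset hV hbd hVU hn.1
  obtain ⟨z, hz, hzlim⟩ := hcpt.ultrafilter_le_nhds (𝒰.map z')
    (le_principal_iff.2 (hz'.mono fun n hn => hn.2))
  obtain ⟨y, hy, hylim⟩ := hcpt.ultrafilter_le_nhds (𝒰.map fun n => g^[n] (z' n))
    (le_principal_iff.2 (hgz'.mono fun n hn => hn.2))
  have hzz := H.subset_preIterLimit_of_isPreconnected h𝒰 hfr hfrR hy hylim hzlim
    (hgz'.mono fun n hn => ⟨hn.1, rfl⟩) hz
  obtain ⟨n, ⟨a, ha, hpre, hrep⟩, -, hn⟩ :=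
    ((H.eventually_exists_repelling h𝒰 (hfrR hz) hzz hε).and hbad).exists
  exact hn ⟨a, hpre.1, hpre.2, hrep, z, hz, ha⟩

/-- **Proposition (case (A)).** Let `Γ₀ = ∂V₀` be a Jordan curve in `U` enclosing `P_g`,
with Jordan domain `V₀` satisfying `P_g ⊆ V₀ ⊆ closure V₀ ⊆ U`. If `Γₙ ∩ Γ₀ ≠ ∅` for all
`n` (where `Γₙ = ∂(g^{-n}(V₀))`), then for every `ε > 0` and every sufficiently large `n`,
the map `gⁿ` has a repelling fixed point in the `ε`-neighborhood of `Γ₀`. -/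
theorem repelling_near_curve {g : ℂ → ℂ} {U' U : Set ℂ} {d : ℕ}
    (H : PLSetting g U' U d) {V₀ : Set ℂ}
    (hV₀ : IsTopDisk V₀) (hV₀bd : Bornology.IsBounded V₀)
    (hΓ₀ : IsJordanCurve (frontier V₀))
    (hPV₀ : postCrit g U' ⊆ V₀) (hV₀U : closure V₀ ⊆ U)
    (hA : ∀ n : ℕ, (frontier (preIter g U' V₀ n) ∩ frontier V₀).Nonempty) :
    ∀ ε > (0 : ℝ), ∃ n₀ : ℕ, ∀ n ≥ n₀, ∃ a : ℂ,
      (∀ k < n, g^[k] a ∈ U') ∧ g^[n] a = a ∧ 1 < ‖deriv (g^[n]) a‖ ∧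
      ∃ b ∈ frontier V₀, dist a b < ε := by
  intro ε hε
  obtain ⟨n₀, hn₀⟩ := eventually_atTop.1 (repelling_near_curve_general
    (ProperSystem.of_plSetting H) hV₀.1 hV₀bd (isPreconnected_of_isJordanCurve hΓ₀) hPV₀ hV₀U hε)
  exact ⟨n₀, fun n hn => hn₀ n hn (hA n)⟩
end
end
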